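/- Let N ≥ 1. (1) If Ẽ^N_{D₃} = 0 (the zero polynomial), then D₀ has a Riccati first integral of degree ≤ N, or a 2-Darbouxian first integral of degree ≤ 2N+4d−1, or a rational first integral of degree ≤ 4N+10d−3, and moreover such a first integral can be chosen defined over K. (2) Conversely, if D₀ has a rational, a 2-Darbouxian, or a Riccati first integral of degree ≤ N, then Ẽ^N_{D₃} = 0. -/

import Mathlib

/-!
The proof studies the generic orbit of `D₃`, i.e. the ring morphism `p ↦ ∑ ev (D₃ⁿ p) tⁿ / n!` into
`K[x,y]⟦t⟧`, where `ev` evaluates at `(x, y, 1, 0, 0)` (`flow`, `phi`). Write `X, Y` for the first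
two coordinates of the orbit, `z` for the series `y₁²` and `s` for the series `3y₂² - 2y₃y₁`
(`zser`, `sser`). They satisfy `z' = 2A²w₁ z` and `s' = 2A²w₁ s - 2w₃ z²` (`derivative_zser`,
`derivative_sser`): the second derivatives of `B/A` cancel in the equation of the Schwarzian.

*Vanishing of the extactic curve means a relation along the orbit* (`extactic3_eq_zero_iff`):
`Ẽ^N = 0` iff there are `a, b, c ∈ K[x,y][X,Y]` of degree at most `N` in `X, Y`, not all zero, with
`a z² + b s + c z = 0`. A vector in the kernel of the matrix is orthogonal to its first `l₃` rows;
since the rows are the iterates of a connection, it is orthogonal to all later ones as well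
(`connection_annihilator`), and these rows contain all Taylor coefficients of the `v_j`.

*Part (2).* If `F` is a first integral, then `F(X,Y) = F(x,y)`, resp. `F(X,Y) z = F(x,y)`, resp.
`F(X,Y) z + s / (4z) = F(x,y)`; both sides have the same value at `t = 0` and satisfy the same first
order linear equation (`ode_unique`). Clearing denominators gives a relation as above.

*Part (1).* If `b = 0`, the relation writes `z` as a ratio `V/U` of polynomials restricted to the
orbit. If `b ≠ 0`, differentiating the relation and eliminating `s` gives `U z = V` with `U, V` of
degree at most `2N + 4d - 1`, unless the coefficient `U` vanishes identically, which says exactly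
that `a / (4b)` is a Riccati first integral over `K(x,y)`; the initial point `(x,y)` is then
specialized to a point of `K²` where `b` does not vanish. Differentiating `U z = V` in turn, either
`U/V` is a 2-Darbouxian first integral, or a nonzero polynomial of degree at most `4N + 10d - 3`
vanishes on the orbit (`of_zser_ratio`).

In this last case the ideal of the orbit in `K[x,y][X,Y]` is a prime lying over `0` in `K[x,y][Y]`
(`transcendental_X`), hence principal, with generator `f` say (`exists_ker_generator`). It is stable
under `D₀`, so `D₀ f = g f`, and the cofactor `g` has degree `0` in `x, y`. Hence all the
coefficients `P_i ∈ K[X,Y]` of `f`, seen as a polynomial in `x, y`, have the same cofactor `g`, and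
the ratios `P_i / P_j` are rational first integrals; they are not all constant, for otherwise `f`
would be the product of a function of `x, y` and a function of `X, Y`, neither of which vanishes on
the orbit (`hasRatFI_of_ker`).

Every construction takes place over `K`, and the result is transported to the algebraic closure.
-/

/-!
# Riccati extactic curve theorem

`K` is a field of characteristic zero with algebraic closure `K̄`, `A, B ∈ K[x,y]` are
coprime nonzero polynomials, `d = max(deg A, deg B) ≥ 1`, and `D₀ = A ∂x + B ∂y`.

(1) If the `N`-th Riccati extactic curve `Ẽ^N_{D₃}` is the zero polynomial, then `D₀` has
a Riccati first integral of degree ≤ N, or a 2-Darbouxian first integral of degree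
≤ 2N+4d−1, or a rational first integral of degree ≤ 4N+10d−3; moreover such a first
integral can be chosen defined over `K`.
(2) Conversely, if `D₀` has a rational, a 2-Darbouxian, or a Riccati first integral of
degree ≤ N then `Ẽ^N_{D₃} = 0`.

With `wPol A B r = A^(r+1)·∂y^r(B/A)`:
a rational first integral of degree ≤ N is a nonconstant `F = p/q` with `D₀(F) = 0`,
encoded by `q·D₀(p) = p·D₀(q)`;
a `k`-Darbouxian first integral of degree ≤ N is a nonzero `G = p/q` with
`D₀(G) = −k·A·∂y(B/A)·G`, encoded by `A·(q·D₀(p) − p·D₀(q)) = −k·w₁·p·q`;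
a Riccati first integral of degree ≤ N is `F = p/q` with
`D₀(F) = −2·A·∂y(B/A)·F + (1/2)·A·∂y³(B/A)`, encoded by
`A³·(q·D₀(p) − p·D₀(q)) = −2·A²·w₁·p·q + (1/2)·w₃·q²`.
-/

open MvPolynomial

namespace ExtacticPaper

noncomputable section

variable {L : Type*}

/-- `wPol A B r` equals `A^(r+1) * ∂y^r (B/A)` as a polynomial. -/
def wPol [CommRing L] (A B : MvPolynomial (Fin 2) L) : ℕ → MvPolynomial (Fin 2) L
  | 0 => B
  | r + 1 => A * pderiv (1 : Fin 2) (wPol A B r) - (r + 1) • (wPol A B r * pderiv (1 : Fin 2) A)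

/-- The derivation `D₀ = A ∂x + B ∂y` of `L[x,y]`. -/
def derD0 [CommRing L] (A B p : MvPolynomial (Fin 2) L) : MvPolynomial (Fin 2) L :=
  A * pderiv (0 : Fin 2) p + B * pderiv (1 : Fin 2) p

/-- Embedding of `L[x,y]` into `L[x,y,y₁,y₂,y₃]`. -/
def emb5 [CommSemiring L] (p : MvPolynomial (Fin 2) L) : MvPolynomial (Fin 5) L :=
  rename (Fin.castLE (by omega)) p

/-- The derivation
`D₃ = A⁴ ∂x + A³ B ∂y + y₁ A⁴ ∂y(B/A) ∂_{y₁} + A⁴ (y₂ ∂y(B/A) + y₁² ∂y²(B/A)) ∂_{y₂}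
  + A⁴ (y₃ ∂y(B/A) + 3 y₂ y₁ ∂y²(B/A) + y₁³ ∂y³(B/A)) ∂_{y₃}` of `L[x,y,y₁,y₂,y₃]`. -/
def derD3 [CommRing L] (A B : MvPolynomial (Fin 2) L) (p : MvPolynomial (Fin 5) L) :
    MvPolynomial (Fin 5) L :=
  emb5 A ^ 4 * pderiv (0 : Fin 5) p + emb5 A ^ 3 * emb5 B * pderiv (1 : Fin 5) p
    + X 2 * emb5 A ^ 2 * emb5 (wPol A B 1) * pderiv (2 : Fin 5) p
    + (X 3 * emb5 A ^ 2 * emb5 (wPol A B 1) + X 2 ^ 2 * emb5 A * emb5 (wPol A B 2))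
        * pderiv (3 : Fin 5) p
    + (X 4 * emb5 A ^ 2 * emb5 (wPol A B 1) + 3 * X 3 * X 2 * emb5 A * emb5 (wPol A B 2)
        + X 2 ^ 3 * emb5 (wPol A B 3)) * pderiv (4 : Fin 5) p

/-- Indexing set for the monomials of total degree at most `N` in two variables:
it has `(N+1)(N+2)/2` elements. -/
abbrev MonIdx (N : ℕ) := {p : Fin (N + 1) × Fin (N + 1) // (p.1 : ℕ) + (p.2 : ℕ) ≤ N}

/-- The monomial basis of `L[x,y]_{≤ N}`. -/
def mon [CommSemiring L] {N : ℕ} (p : MonIdx N) : MvPolynomial (Fin 2) L :=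
  X 0 ^ (p.1.1 : ℕ) * X 1 ^ (p.1.2 : ℕ)

/-- The basis `(y₁⁴ b₁,…, (3y₂²−2y₃y₁) b₁,…, y₁² b₁,…)` of
`V₃ = L[x,y]_{≤N} y₁⁴ ⊕ L[x,y]_{≤N} (3y₂²−2y₃y₁) ⊕ L[x,y]_{≤N} y₁²`. -/
def basV3 [CommRing L] {N : ℕ} :
    MonIdx N ⊕ (MonIdx N ⊕ MonIdx N) → MvPolynomial (Fin 5) L
  | .inl p => X 2 ^ 4 * emb5 (mon p)
  | .inr (.inl p) => (3 * X 3 ^ 2 - 2 * X 4 * X 2) * emb5 (mon p)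
  | .inr (.inr p) => X 2 ^ 2 * emb5 (mon p)

/-- The `N`-th Riccati extactic curve `Ẽ^N_{D₃}`: the determinant of the `l₃ × l₃` matrix
whose `(i,j)` entry is `D₃^{i-1}(v_j)` specialized at `y₁ = 1`, `y₂ = 0`, `y₃ = 0`. -/
def extactic3 [CommRing L] (A B : MvPolynomial (Fin 2) L) (N : ℕ) :
    MvPolynomial (Fin 2) L :=
  Matrix.det (Matrix.of fun i j : Fin (Fintype.card (MonIdx N ⊕ (MonIdx N ⊕ MonIdx N))) =>
    aeval ![X 0, X 1, 1, 0, 0]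
      ((derD3 A B)^[(i : ℕ)]
        (basV3 ((Fintype.equivFin (MonIdx N ⊕ (MonIdx N ⊕ MonIdx N))).symm j))))

/-- `D₀` has a rational first integral of degree ≤ N (with witness over `L`). -/
def HasRatFI [Field L] (A B : MvPolynomial (Fin 2) L) (N : ℕ) : Prop :=
  ∃ p q : MvPolynomial (Fin 2) L, q ≠ 0 ∧ p.totalDegree ≤ N ∧ q.totalDegree ≤ N ∧
    q * derD0 A B p = p * derD0 A B q ∧ ∀ c : L, p ≠ C c * q

/-- `D₀` has a `k`-Darbouxian first integral of degree ≤ N (with witness over `L`). -/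
def HasDarbFI [Field L] (A B : MvPolynomial (Fin 2) L) (k N : ℕ) : Prop :=
  ∃ p q : MvPolynomial (Fin 2) L, q ≠ 0 ∧ p ≠ 0 ∧ p.totalDegree ≤ N ∧ q.totalDegree ≤ N ∧
    A * (q * derD0 A B p - p * derD0 A B q)
      = -((k : MvPolynomial (Fin 2) L) * wPol A B 1 * p * q)

/-- `D₀` has a Riccati first integral of degree ≤ N (with witness over `L`). -/
def HasRicFI [Field L] (A B : MvPolynomial (Fin 2) L) (N : ℕ) : Prop :=
  ∃ p q : MvPolynomial (Fin 2) L, q ≠ 0 ∧ p.totalDegree ≤ N ∧ q.totalDegree ≤ N ∧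
    A ^ 3 * (q * derD0 A B p - p * derD0 A B q)
      = -(2 * A ^ 2 * wPol A B 1 * p * q) + C (1/2 : L) * wPol A B 3 * q ^ 2

/-- Base change of a polynomial from `K` to the algebraic closure of `K`. -/
def mapAC {K : Type*} [Field K] (p : MvPolynomial (Fin 2) K) :
    MvPolynomial (Fin 2) (AlgebraicClosure K) :=
  MvPolynomial.map (algebraMap K (AlgebraicClosure K)) p

/-! ### Flows of derivations and linear differential equations -/

theorem iterate_leibniz {K P : Type*} [CommRing K] [CommRing P] [Algebra K P]
    (D : Derivation K P P) (p q : P) (n : ℕ) :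
    D^[n] (p * q) = ∑ ij ∈ Finset.HasAntidiagonal.antidiagonal n,
      (n.choose ij.1 : P) * (D^[ij.1] p * D^[ij.2] q) := by
  induction n with
  | zero => simp
  | succ n ih =>
    rw [Finset.sum_antidiagonal_choose_succ_mul (fun i j => D^[i] p * D^[j] q),
      Function.iterate_succ_apply', ih, map_sum, ← Finset.sum_add_distrib]
    refine Finset.sum_congr rfl fun ij _ => ?_
    rw [Derivation.leibniz, Derivation.leibniz, Derivation.map_natCast]
    simp only [Function.iterate_succ_apply', smul_eq_mul]
    have hc : (n.choose ij.2 : P) = (n.choose ij.1 : P) := by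
      rw [Nat.choose_symm_of_eq_add (Finset.HasAntidiagonal.mem_antidiagonal.mp ‹_›).symm]
    rw [hc]
    ring

section flow
variable {K P R : Type*} [Field K] [CharZero K] [CommRing P] [Algebra K P]
  [CommRing R] [Algebra K R]

/-- The orbit map `exp (t D)` of a derivation `D`, followed by the evaluation `ev` at a point:
`p` is sent to the Taylor series `∑ ev (Dⁿ p) tⁿ / n!` of `p` along the flow of `D` issued from
that point. -/
def flow (D : Derivation K P P) (ev : P →ₐ[K] R) : P →+* PowerSeries R where
  toFun p := PowerSeries.mk fun n => ((n.factorial : K)⁻¹) • ev (D^[n] p)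
  map_zero' := by
    ext n
    simp [iterate_map_zero]
  map_one' := by
    ext n
    rcases n with _ | n
    · simp
    · have : D^[n + 1] (1 : P) = 0 := by
        rw [Function.iterate_succ_apply, Derivation.map_one_eq_zero, iterate_map_zero]
      simp [this, PowerSeries.coeff_one]
  map_add' p q := by
    ext n
    simp [iterate_map_add]
  map_mul' p q := by
    ext n
    rw [PowerSeries.coeff_mul, PowerSeries.coeff_mk, iterate_leibniz, map_sum, Finset.smul_sum]
    refine Finset.sum_congr rfl fun ij hij => ?_
    rw [PowerSeries.coeff_mk, PowerSeries.coeff_mk, smul_mul_smul_comm, map_mul, map_mul,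
      map_natCast, ← nsmul_eq_mul, ← Nat.cast_smul_eq_nsmul K, smul_smul]
    congr 1
    have hn := Finset.HasAntidiagonal.mem_antidiagonal.mp hij
    rw [← hn, Nat.cast_add_choose]
    have h1 : ((ij.1 + ij.2).factorial : K) ≠ 0 := by exact_mod_cast Nat.factorial_ne_zero _
    field_simp

theorem coeff_flow (D : Derivation K P P) (ev : P →ₐ[K] R) (p : P) (n : ℕ) :
    PowerSeries.coeff n (flow D ev p) = ((n.factorial : K)⁻¹) • ev (D^[n] p) :=
  PowerSeries.coeff_mk n fun n => ((n.factorial : K)⁻¹) • ev (D^[n] p)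

theorem constantCoeff_flow (D : Derivation K P P) (ev : P →ₐ[K] R) (p : P) :
    PowerSeries.constantCoeff (flow D ev p) = ev p := by
  rw [← PowerSeries.coeff_zero_eq_constantCoeff_apply, coeff_flow]
  simp

theorem derivative_flow (D : Derivation K P P) (ev : P →ₐ[K] R) (p : P) :
    PowerSeries.derivative R (flow D ev p) = flow D ev (D p) := by
  ext n
  rw [PowerSeries.coeff_derivative, coeff_flow, coeff_flow, ← Function.iterate_succ_apply,
    mul_comm, ← Nat.cast_succ, ← nsmul_eq_mul, ← Nat.cast_smul_eq_nsmul K, smul_smul]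
  congr 1
  rw [Nat.factorial_succ]
  have h1 : ((n + 1 : ℕ) : K) ≠ 0 := by exact_mod_cast Nat.succ_ne_zero n
  push_cast at h1 ⊢
  field_simp

end flow

/-- A first order linear homogeneous differential equation `w' v = w g` that is nonsingular at the
origin has at most one solution with given initial value. -/
theorem ode_unique {R : Type*} [CommRing R] [IsDomain R] [CharZero R]
    (w v g : PowerSeries R) (hv : PowerSeries.constantCoeff v ≠ 0)
    (hw : PowerSeries.constantCoeff w = 0)
    (h : PowerSeries.derivative R w * v = w * g) : w = 0 := by
  have key : ∀ n, ∀ m ≤ n, PowerSeries.coeff m w = 0 := by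
    intro n
    induction n with
    | zero =>
      intro m hm
      obtain rfl : m = 0 := by omega
      rwa [PowerSeries.coeff_zero_eq_constantCoeff_apply]
    | succ n ih =>
      intro m hm
      rcases Nat.lt_or_ge m (n + 1) with hm' | hm'
      · exact ih m (by omega)
      obtain rfl : m = n + 1 := by omega
      have h2 := congrArg (PowerSeries.coeff n) h
      rw [PowerSeries.coeff_mul, PowerSeries.coeff_mul] at h2
      rw [Finset.sum_eq_zero (s := Finset.HasAntidiagonal.antidiagonal n)
        (f := fun p => PowerSeries.coeff p.1 w * PowerSeries.coeff p.2 g)] at h2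
      · rw [Finset.sum_eq_single (n, 0)] at h2
        · rw [PowerSeries.coeff_derivative, PowerSeries.coeff_zero_eq_constantCoeff_apply] at h2
          have h3 : ((n : R) + 1) ≠ 0 := by exact_mod_cast Nat.succ_ne_zero n
          simpa [hv, h3] using h2
        · rintro ⟨i, j⟩ hij hne
          have := Finset.HasAntidiagonal.mem_antidiagonal.mp hij
          simp only at this
          rw [PowerSeries.coeff_derivative, ih (i + 1) ?_]
          · simp
          · by_contra hcon
            apply hne
            ext <;> simp <;> omega
        · simp
      · rintro ⟨i, j⟩ hij
        have := Finset.HasAntidiagonal.mem_antidiagonal.mp hij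
        simp only at this
        rw [ih i (by omega), zero_mul]
  ext n
  simpa using key n n le_rfl

/-! ### The rows of the extactic matrix -/

section D3
variable [CommRing L]

/-- The map `derD3 A B` as a bundled derivation. -/
def D3 (A B : MvPolynomial (Fin 2) L) :
    Derivation L (MvPolynomial (Fin 5) L) (MvPolynomial (Fin 5) L) :=
  (emb5 A ^ 4) • pderiv (0 : Fin 5) + (emb5 A ^ 3 * emb5 B) • pderiv (1 : Fin 5)
    + (X 2 * emb5 A ^ 2 * emb5 (wPol A B 1)) • pderiv (2 : Fin 5)
    + (X 3 * emb5 A ^ 2 * emb5 (wPol A B 1) + X 2 ^ 2 * emb5 A * emb5 (wPol A B 2))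
        • pderiv (3 : Fin 5)
    + (X 4 * emb5 A ^ 2 * emb5 (wPol A B 1) + 3 * X 3 * X 2 * emb5 A * emb5 (wPol A B 2)
        + X 2 ^ 3 * emb5 (wPol A B 3)) • pderiv (4 : Fin 5)

theorem coe_D3 (A B : MvPolynomial (Fin 2) L) : ⇑(D3 A B) = derD3 A B := by
  funext p
  simp [D3, derD3, smul_eq_mul]

theorem emb5_add (p q : MvPolynomial (Fin 2) L) : emb5 (p + q) = emb5 p + emb5 q := by
  simp [emb5]

theorem emb5_sub (p q : MvPolynomial (Fin 2) L) : emb5 (p - q) = emb5 p - emb5 q := by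
  simp [emb5]

theorem emb5_mul (p q : MvPolynomial (Fin 2) L) : emb5 (p * q) = emb5 p * emb5 q := by
  simp [emb5]

theorem emb5_pow (p : MvPolynomial (Fin 2) L) (n : ℕ) : emb5 (p ^ n) = emb5 p ^ n := by
  simp [emb5]

theorem emb5_C (c : L) : emb5 (C c) = C c := by simp [emb5]

theorem emb5_X0 : emb5 (X 0 : MvPolynomial (Fin 2) L) = X 0 := by
  simp [emb5]

theorem emb5_X1 : emb5 (X 1 : MvPolynomial (Fin 2) L) = X 1 := by
  simp [emb5]

theorem emb5_ofNat (n : ℕ) [n.AtLeastTwo] :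
    emb5 (ofNat(n) : MvPolynomial (Fin 2) L) = ofNat(n) :=
  map_ofNat (rename _) n

theorem derD0_mul (A B p q : MvPolynomial (Fin 2) L) :
    derD0 A B (p * q) = derD0 A B p * q + p * derD0 A B q := by
  simp only [derD0, Derivation.leibniz, smul_eq_mul]
  ring

theorem derD0_add (A B p q : MvPolynomial (Fin 2) L) :
    derD0 A B (p + q) = derD0 A B p + derD0 A B q := by
  simp only [derD0, map_add]
  ring

theorem derD0_C (A B : MvPolynomial (Fin 2) L) (c : L) : derD0 A B (C c) = 0 := by
  simp [derD0]

theorem derD0_X0 (A B : MvPolynomial (Fin 2) L) : derD0 A B (X 0) = A := by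
  simp [derD0, pderiv_X]

theorem derD0_X1 (A B : MvPolynomial (Fin 2) L) : derD0 A B (X 1) = B := by
  simp [derD0, pderiv_X]

theorem D3_X0 (A B : MvPolynomial (Fin 2) L) : D3 A B (X 0) = emb5 (A ^ 4) := by
  simp [coe_D3, derD3, pderiv_X, emb5_pow]

theorem D3_X1 (A B : MvPolynomial (Fin 2) L) : D3 A B (X 1) = emb5 (A ^ 3 * B) := by
  simp [coe_D3, derD3, pderiv_X, emb5_pow, emb5_mul]

theorem D3_X2 (A B : MvPolynomial (Fin 2) L) :
    D3 A B (X 2) = X 2 * emb5 A ^ 2 * emb5 (wPol A B 1) := by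
  simp [coe_D3, derD3, pderiv_X]

theorem D3_X3 (A B : MvPolynomial (Fin 2) L) :
    D3 A B (X 3) = X 3 * emb5 A ^ 2 * emb5 (wPol A B 1)
      + X 2 ^ 2 * emb5 A * emb5 (wPol A B 2) := by
  simp [coe_D3, derD3, pderiv_X]

theorem D3_X4 (A B : MvPolynomial (Fin 2) L) :
    D3 A B (X 4) = X 4 * emb5 A ^ 2 * emb5 (wPol A B 1)
      + 3 * X 3 * X 2 * emb5 A * emb5 (wPol A B 2) + X 2 ^ 3 * emb5 (wPol A B 3) := by
  simp [coe_D3, derD3, pderiv_X]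

/-- On functions of `x, y` alone, `D₃` acts as `A³ D₀`. -/
theorem D3_emb5 (A B f : MvPolynomial (Fin 2) L) :
    D3 A B (emb5 f) = emb5 (A ^ 3 * derD0 A B f) := by
  induction f using MvPolynomial.induction_on with
  | C c =>
    rw [emb5_C, derD0_C, mul_zero, ← algebraMap_eq, Derivation.map_algebraMap]
    simp [emb5]
  | add p q hp hq => rw [emb5_add, map_add, hp, hq, derD0_add, mul_add, emb5_add]
  | mul_X p i hp =>
    rw [emb5_mul, Derivation.leibniz, hp, derD0_mul, smul_eq_mul, smul_eq_mul]
    fin_cases i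
    · simp only [Fin.zero_eta, emb5_X0, D3_X0, derD0_X0, emb5_mul, emb5_add, emb5_pow]
      ring
    · simp only [Fin.mk_one, emb5_X1, D3_X1, derD0_X1, emb5_mul, emb5_add, emb5_pow]
      ring

/-- The polynomial `3 y₂² - 2 y₃ y₁`, that is `-2 y₁²` times the Schwarzian
`y₃ / y₁ - (3/2) (y₂ / y₁)²`. -/
def schw : MvPolynomial (Fin 5) L := 3 * X 3 ^ 2 - 2 * X 4 * X 2

theorem D3_sq (A B : MvPolynomial (Fin 2) L) :
    D3 A B (X 2 ^ 2) = X 2 ^ 2 * emb5 (2 * A ^ 2 * wPol A B 1) := by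
  rw [pow_two, Derivation.leibniz, D3_X2, smul_eq_mul]
  simp only [emb5_mul, emb5_pow, emb5_ofNat]
  ring

theorem D3_quartic (A B : MvPolynomial (Fin 2) L) :
    D3 A B (X 2 ^ 4) = X 2 ^ 4 * emb5 (4 * A ^ 2 * wPol A B 1) := by
  rw [show (X 2 : MvPolynomial (Fin 5) L) ^ 4 = X 2 ^ 2 * X 2 ^ 2 by ring, Derivation.leibniz,
    D3_sq, smul_eq_mul]
  simp only [emb5_mul, emb5_pow, emb5_ofNat]
  ring

/-- The Schwarzian of the flow satisfies a first order equation in which the second derivatives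
`∂y²(B/A)` have cancelled. -/
theorem D3_schw (A B : MvPolynomial (Fin 2) L) :
    D3 A B schw = schw * emb5 (2 * A ^ 2 * wPol A B 1) - X 2 ^ 4 * emb5 (2 * wPol A B 3) := by
  have h : (schw : MvPolynomial (Fin 5) L) = C 3 * (X 3 * X 3) - C 2 * (X 4 * X 2) := by
    simp only [schw, map_ofNat]
    ring
  rw [h, map_sub, ← smul_eq_C_mul, ← smul_eq_C_mul, Derivation.map_smul, Derivation.map_smul,
    Derivation.leibniz, Derivation.leibniz, D3_X2, D3_X3, D3_X4]
  simp only [smul_eq_C_mul, smul_eq_mul, map_ofNat, emb5_mul, emb5_pow, emb5_ofNat]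
  ring

/-- The action of `D₃` on the coefficient of `y₁⁴`. -/
def opA (A B f : MvPolynomial (Fin 2) L) : MvPolynomial (Fin 2) L :=
  A ^ 3 * derD0 A B f + 4 * A ^ 2 * wPol A B 1 * f

/-- The action of `D₃` on the coefficient of `y₁²`, and on that of `3 y₂² - 2 y₃ y₁`. -/
def opC (A B f : MvPolynomial (Fin 2) L) : MvPolynomial (Fin 2) L :=
  A ^ 3 * derD0 A B f + 2 * A ^ 2 * wPol A B 1 * f

/-- The coefficient of `y₁⁴` in `D₃ⁱ ((3 y₂² - 2 y₃ y₁) f)`. -/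
def opB (A B f : MvPolynomial (Fin 2) L) : ℕ → MvPolynomial (Fin 2) L
  | 0 => 0
  | i + 1 => opA A B (opB A B f i) - 2 * wPol A B 3 * (opC A B)^[i] f

theorem D3_iter_quartic (A B f : MvPolynomial (Fin 2) L) (i : ℕ) :
    (D3 A B)^[i] (X 2 ^ 4 * emb5 f) = X 2 ^ 4 * emb5 ((opA A B)^[i] f) := by
  induction i with
  | zero => rfl
  | succ i ih =>
    rw [Function.iterate_succ_apply', ih, Function.iterate_succ_apply', Derivation.leibniz,
      D3_quartic, D3_emb5, opA, smul_eq_mul, smul_eq_mul, emb5_add, emb5_mul _ ((opA A B)^[i] f)]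
    ring

theorem D3_iter_sq (A B f : MvPolynomial (Fin 2) L) (i : ℕ) :
    (D3 A B)^[i] (X 2 ^ 2 * emb5 f) = X 2 ^ 2 * emb5 ((opC A B)^[i] f) := by
  induction i with
  | zero => rfl
  | succ i ih =>
    rw [Function.iterate_succ_apply', ih, Function.iterate_succ_apply', Derivation.leibniz,
      D3_sq, D3_emb5, opC, smul_eq_mul, smul_eq_mul, emb5_add, emb5_mul _ ((opC A B)^[i] f)]
    ring

theorem D3_iter_schw (A B f : MvPolynomial (Fin 2) L) (i : ℕ) :
    (D3 A B)^[i] (schw * emb5 f)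
      = schw * emb5 ((opC A B)^[i] f) + X 2 ^ 4 * emb5 (opB A B f i) := by
  induction i with
  | zero => simp [opB, emb5]
  | succ i ih =>
    rw [Function.iterate_succ_apply', ih, Function.iterate_succ_apply', map_add,
      Derivation.leibniz, Derivation.leibniz, D3_schw, D3_quartic, D3_emb5, D3_emb5, opB, opC, opA]
    simp only [smul_eq_mul, emb5_add, emb5_mul, emb5_sub]
    ring

/-- The evaluation at the point `(x, y, 1, 0, 0)`. -/
def ev : MvPolynomial (Fin 5) L →ₐ[L] MvPolynomial (Fin 2) L := aeval ![X 0, X 1, 1, 0, 0]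

theorem ev_emb5 (f : MvPolynomial (Fin 2) L) : ev (emb5 f) = f := by
  rw [emb5, ev, aeval_rename]
  conv_rhs => rw [← aeval_X_left_apply f]
  congr 2
  funext i
  fin_cases i <;> rfl

theorem ev_X2 : ev (X 2 : MvPolynomial (Fin 5) L) = 1 := by simp [ev]

theorem ev_schw : ev (schw : MvPolynomial (Fin 5) L) = 0 := by simp [ev, schw]

/-- The `i`-th row of the extactic matrix. -/
def row (A B : MvPolynomial (Fin 2) L) (N i : ℕ) (j : MonIdx N ⊕ (MonIdx N ⊕ MonIdx N)) :
    MvPolynomial (Fin 2) L :=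
  ev ((D3 A B)^[i] (basV3 j))

theorem row_inl (A B : MvPolynomial (Fin 2) L) (N i : ℕ) (p : MonIdx N) :
    row A B N i (.inl p) = (opA A B)^[i] (mon p) := by
  rw [row, basV3, D3_iter_quartic, map_mul, map_pow, ev_X2, ev_emb5, one_pow, one_mul]

theorem row_inr_inr (A B : MvPolynomial (Fin 2) L) (N i : ℕ) (p : MonIdx N) :
    row A B N i (.inr (.inr p)) = (opC A B)^[i] (mon p) := by
  rw [row, basV3, D3_iter_sq, map_mul, map_pow, ev_X2, ev_emb5, one_pow, one_mul]

theorem row_inr_inl (A B : MvPolynomial (Fin 2) L) (N i : ℕ) (p : MonIdx N) :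
    row A B N i (.inr (.inl p)) = opB A B (mon p) i := by
  rw [row, basV3, ← schw, D3_iter_schw]
  simp only [map_add, map_mul, map_pow, ev_X2, ev_schw, ev_emb5, one_pow, one_mul, zero_mul,
    zero_add]

/-- The differential operator that carries each row of the extactic matrix to the next one. -/
def nabla (A B : MvPolynomial (Fin 2) L) {N : ℕ}
    (u : MonIdx N ⊕ (MonIdx N ⊕ MonIdx N) → MvPolynomial (Fin 2) L) :
    MonIdx N ⊕ (MonIdx N ⊕ MonIdx N) → MvPolynomial (Fin 2) L
  | .inl p => opA A B (u (.inl p))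
  | .inr (.inl p) => opA A B (u (.inr (.inl p))) - 2 * wPol A B 3 * u (.inr (.inr p))
  | .inr (.inr p) => opC A B (u (.inr (.inr p)))

theorem row_succ (A B : MvPolynomial (Fin 2) L) (N i : ℕ) :
    row A B N (i + 1) = nabla A B (row A B N i) := by
  funext j
  rcases j with p | p | p
  · simp only [nabla, row_inl, Function.iterate_succ_apply']
  · simp only [nabla, row_inr_inl, row_inr_inr, opB]
  · simp only [nabla, row_inr_inr, Function.iterate_succ_apply']

theorem nabla_add (A B : MvPolynomial (Fin 2) L) {N : ℕ}
    (u v : MonIdx N ⊕ (MonIdx N ⊕ MonIdx N) → MvPolynomial (Fin 2) L) :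
    nabla A B (u + v) = nabla A B u + nabla A B v := by
  funext j
  rcases j with p | p | p <;> simp only [nabla, Pi.add_apply, opA, opC, derD0_add] <;> ring

theorem nabla_smul (A B f : MvPolynomial (Fin 2) L) {N : ℕ}
    (u : MonIdx N ⊕ (MonIdx N ⊕ MonIdx N) → MvPolynomial (Fin 2) L) :
    nabla A B (f • u) = (A ^ 3 * derD0 A B f) • u + f • nabla A B u := by
  funext j
  rcases j with p | p | p <;>
    simp only [nabla, Pi.add_apply, Pi.smul_apply, smul_eq_mul, opA, opC, derD0_mul] <;> ring

end D3

/-- If the first `n` iterates `v 0, v 1, …` of a connection are linearly dependent, then one of them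
depends on the preceding ones over the fraction field, and so do all later iterates. Hence a vector
orthogonal to the first `n` iterates is orthogonal to all of them. -/
theorem connection_annihilator {R ι : Type*} [CommRing R] [IsDomain R] [Fintype ι]
    (nab : (ι → R) → (ι → R)) (δ : R → R)
    (hadd : ∀ u v, nab (u + v) = nab u + nab v)
    (hsmul : ∀ f u, nab (f • u) = δ f • u + f • nab u)
    (v : ℕ → ι → R) (hv : ∀ i, v (i + 1) = nab (v i)) (n : ℕ)
    (g : Fin n → R) (hg0 : g ≠ 0) (hg : ∑ i, g i • v i = 0)
    (c : ι → R) (hc : ∀ i < n, ∑ j, v i j * c j = 0) (i : ℕ) :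
    ∑ j, v i j * c j = 0 := by
  classical
  -- `k` is the largest index occurring in the given dependency relation
  obtain ⟨k, hk, hkmax⟩ : ∃ k : Fin n, g k ≠ 0 ∧ ∀ j, k < j → g j = 0 := by
    have hne : (Finset.univ.filter fun i => g i ≠ 0).Nonempty := by
      obtain ⟨i, hi⟩ := Function.ne_iff.mp hg0
      exact ⟨i, by simpa using hi⟩
    refine ⟨(Finset.univ.filter fun i => g i ≠ 0).max' hne, ?_, ?_⟩
    · simpa using Finset.max'_mem _ hne
    · intro j hj
      by_contra hcon
      exact absurd (Finset.le_max' _ j (by simpa using hcon)) (not_le.mpr hj)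
  let M : Submodule R (ι → R) := Submodule.span R (v '' {i | i < (k : ℕ)})
  have hrel : g k • v k ∈ M := by
    have h1 : g k • v k = -∑ i ∈ Finset.univ.erase k, g i • v i := by
      rw [← Finset.add_sum_erase _ _ (Finset.mem_univ k)] at hg
      exact eq_neg_of_add_eq_zero_left hg
    rw [h1]
    refine M.neg_mem (M.sum_mem fun i hi => ?_)
    rcases lt_or_gt_of_ne (Finset.ne_of_mem_erase hi) with h | h
    · exact M.smul_mem _ (Submodule.subset_span ⟨i, h, rfl⟩)
    · rw [hkmax i h, zero_smul]
      exact M.zero_mem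
  have hnab : ∀ u ∈ M, g k • nab u ∈ M := by
    have hnab0 : nab 0 = 0 := by simpa using hadd 0 0
    intro u hu
    induction hu using Submodule.span_induction with
    | mem x hx =>
      obtain ⟨i, hi, rfl⟩ := hx
      rw [← hv]
      rcases Nat.lt_or_ge (i + 1) k with h | h
      · exact M.smul_mem _ (Submodule.subset_span ⟨i + 1, h, rfl⟩)
      · have : i + 1 = k := le_antisymm hi h
        rw [this]
        exact hrel
    | zero => rw [hnab0, smul_zero]; exact M.zero_mem
    | add x y _ _ hx hy => rw [hadd, smul_add]; exact M.add_mem hx hy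
    | smul a x hxM hx =>
      rw [hsmul, smul_add, smul_comm (g k) a]
      exact M.add_mem (M.smul_mem _ (M.smul_mem _ hxM)) (M.smul_mem _ hx)
  have hall : ∀ i, ∃ a : R, a ≠ 0 ∧ a • v i ∈ M := by
    intro i
    induction i with
    | zero =>
      rcases Nat.eq_zero_or_pos (k : ℕ) with h | h
      · exact ⟨g k, hk, by rw [h] at hrel; exact hrel⟩
      · exact ⟨1, one_ne_zero, M.smul_mem _ (Submodule.subset_span ⟨0, h, rfl⟩)⟩
    | succ i ih =>
      obtain ⟨a, ha, hM⟩ := ih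
      refine ⟨g k * a * a, mul_ne_zero (mul_ne_zero hk ha) ha, ?_⟩
      have h1 := hnab _ hM
      rw [hsmul, ← hv] at h1
      have h2 : (g k * a * a) • v (i + 1)
          = a • (g k • (δ a • v i + a • v (i + 1))) - (g k * δ a) • a • v i := by
        funext j
        simp only [Pi.smul_apply, Pi.sub_apply, Pi.add_apply, smul_eq_mul]
        ring
      rw [h2]
      exact M.sub_mem (M.smul_mem _ h1) (M.smul_mem _ hM)
  have hMc : ∀ u ∈ M, ∑ j, u j * c j = 0 := by
    intro u hu
    induction hu using Submodule.span_induction with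
    | mem x hx =>
      obtain ⟨i, hi, rfl⟩ := hx
      exact hc i (lt_trans hi k.2)
    | zero => simp
    | add x y _ _ hx hy => simp [add_mul, Finset.sum_add_distrib, hx, hy]
    | smul a x _ hx => simp [mul_assoc, ← Finset.mul_sum, hx]
  obtain ⟨a, ha, hM⟩ := hall i
  have h := hMc _ hM
  simp only [Pi.smul_apply, smul_eq_mul, mul_assoc, ← Finset.mul_sum] at h
  exact (mul_eq_zero.mp h).resolve_left ha

/-! ### The generic orbit and the relations it satisfies -/

section basechange
variable {L' : Type*} [CommRing L] [CommRing L'] (φ : L →+* L')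

theorem wPol_map (A B : MvPolynomial (Fin 2) L) (r : ℕ) :
    wPol (map φ A) (map φ B) r = map φ (wPol A B r) := by
  induction r with
  | zero => rfl
  | succ r ih => simp [wPol, ih, pderiv_map]

theorem derD0_map (A B p : MvPolynomial (Fin 2) L) :
    derD0 (map φ A) (map φ B) (map φ p) = map φ (derD0 A B p) := by
  simp [derD0, pderiv_map]

theorem emb5_map (p : MvPolynomial (Fin 2) L) : emb5 (map φ p) = map φ (emb5 p) := by
  rw [emb5, emb5, map_rename]

theorem derD3_map (A B : MvPolynomial (Fin 2) L) (p : MvPolynomial (Fin 5) L) :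
    derD3 (map φ A) (map φ B) (map φ p) = map φ (derD3 A B p) := by
  simp [derD3, wPol_map, emb5_map, pderiv_map]

theorem extactic3_map (A B : MvPolynomial (Fin 2) L) (N : ℕ) :
    extactic3 (map φ A) (map φ B) N = map φ (extactic3 A B N) := by
  rw [extactic3, extactic3, RingHom.map_det]
  congr 1
  ext1 i j
  simp only [Matrix.of_apply, RingHom.mapMatrix_apply, Matrix.map_apply]
  have hb : ∀ j : MonIdx N ⊕ (MonIdx N ⊕ MonIdx N),
      (basV3 j : MvPolynomial (Fin 5) L') = map φ (basV3 j) := by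
    rintro (p | p | p) <;> simp [basV3, mon, emb5]
  have hit : ∀ (n : ℕ) (p : MvPolynomial (Fin 5) L),
      (derD3 (map φ A) (map φ B))^[n] (map φ p) = map φ ((derD3 A B)^[n] p) := by
    intro n
    induction n with
    | zero => intro p; rfl
    | succ n ih =>
      intro p
      rw [Function.iterate_succ_apply, derD3_map, ih, Function.iterate_succ_apply]
  have hev : ∀ p : MvPolynomial (Fin 5) L,
      ev (map φ p) = map φ (ev p) := by
    intro p
    induction p using MvPolynomial.induction_on with
    | C c => simp [ev]
    | add p q hp hq => simp only [map_add, hp, hq]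
    | mul_X p i hp =>
      rw [map_mul, map_mul, map_mul, map_mul, hp, map_X]
      congr 1
      fin_cases i <;> simp [ev]
  rw [hb, hit]
  exact hev _

end basechange

/-- The polynomial of degree at most `N` with given coefficients. -/
def polyOf [CommRing L] {N : ℕ} (c : MonIdx N → L) : MvPolynomial (Fin 2) L :=
  ∑ p, C (c p) * mon p

section polyOf
variable [CommRing L] {N : ℕ}

/-- The exponent of a monomial of degree at most `N`. -/
def expo (p : MonIdx N) : Fin 2 →₀ ℕ :=
  Finsupp.single 0 (p.1.1 : ℕ) + Finsupp.single 1 (p.1.2 : ℕ)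

theorem expo_injective : Function.Injective (expo (N := N)) := by
  intro p q h
  have h0 := DFunLike.congr_fun h 0
  have h1 := DFunLike.congr_fun h 1
  simp [expo] at h0 h1
  apply Subtype.ext
  apply Prod.ext
  · exact Fin.ext h0
  · exact Fin.ext h1

theorem C_mul_mon (a : L) (p : MonIdx N) : C a * mon p = monomial (expo p) a := by
  rw [mon, expo, X_pow_eq_monomial, X_pow_eq_monomial, monomial_mul, C_mul_monomial]
  simp

theorem coeff_polyOf (c : MonIdx N → L) (p : MonIdx N) : coeff (expo p) (polyOf c) = c p := by
  classical
  rw [polyOf, coeff_sum, Finset.sum_eq_single p]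
  · rw [C_mul_mon, coeff_monomial, if_pos rfl]
  · intro q _ hq
    rw [C_mul_mon, coeff_monomial, if_neg fun h => hq (expo_injective h)]
  · simp

theorem totalDegree_polyOf_le (c : MonIdx N → L) : (polyOf c).totalDegree ≤ N := by
  refine totalDegree_finsetSum_le fun p _ => ?_
  rw [C_mul_mon]
  refine (totalDegree_monomial_le _ _).trans ?_
  rw [expo, Finsupp.sum_add_index'] <;> simp
  exact p.2

theorem exists_polyOf (f : MvPolynomial (Fin 2) L) (hf : f.totalDegree ≤ N) :
    ∃ c : MonIdx N → L, f = polyOf c := by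
  classical
  refine ⟨fun p => coeff (expo p) f, ?_⟩
  ext m
  by_cases hm : m 0 + m 1 ≤ N
  · obtain ⟨p, rfl⟩ : ∃ p : MonIdx N, expo p = m := by
      refine ⟨⟨(⟨m 0, by omega⟩, ⟨m 1, by omega⟩), hm⟩, ?_⟩
      ext i
      fin_cases i <;> simp [expo]
    rw [coeff_polyOf]
  · have hd : m.degree = m 0 + m 1 := by
      rw [Finsupp.degree_eq_sum]
      simp
    rw [coeff_eq_zero_of_totalDegree_lt, coeff_eq_zero_of_totalDegree_lt]
    · change _ < m.degree
      rw [hd]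
      exact lt_of_le_of_lt (totalDegree_polyOf_le _) (not_le.mp hm)
    · change _ < m.degree
      rw [hd]
      exact lt_of_le_of_lt hf (not_le.mp hm)

end polyOf

section orbit
variable {K : Type*} [Field K] [CharZero K]

/-- The generic orbit of `D₃`, issued from `(x, y, 1, 0, 0)`. -/
def phi (A B : MvPolynomial (Fin 2) K) :
    MvPolynomial (Fin 5) K →+* PowerSeries (MvPolynomial (Fin 2) K) :=
  flow (D3 A B) ev

/-- Restriction to the generic orbit of the polynomials in `X, Y` whose coefficients are
polynomials in the initial point `(x, y)`. The elements of `K[x,y][X,Y]` coming from `K[X,Y]` are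
written `map C f`. -/
def phiS (A B : MvPolynomial (Fin 2) K) :
    MvPolynomial (Fin 2) (MvPolynomial (Fin 2) K) →+* PowerSeries (MvPolynomial (Fin 2) K) :=
  eval₂Hom PowerSeries.C fun i => phi A B (emb5 (X i))

theorem phiS_C (A B : MvPolynomial (Fin 2) K) (r : MvPolynomial (Fin 2) K) :
    phiS A B (C r) = PowerSeries.C r := by
  simp [phiS]

theorem phi_C (A B : MvPolynomial (Fin 2) K) (k : K) :
    phi A B (C k) = PowerSeries.C (C k) := by
  ext1 n
  rw [phi, coeff_flow, PowerSeries.coeff_C]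
  rcases n with _ | n
  · simp [ev]
  · rw [Function.iterate_succ_apply, ← algebraMap_eq, Derivation.map_algebraMap, iterate_map_zero]
    simp

theorem phiS_map (A B f : MvPolynomial (Fin 2) K) :
    phiS A B (map C f) = phi A B (emb5 f) := by
  induction f using MvPolynomial.induction_on with
  | C c => rw [map_C, phiS_C, emb5_C, phi_C]
  | add p q hp hq => simp only [map_add, hp, hq, emb5_add]
  | mul_X p i hp =>
    rw [map_mul, map_mul, hp, emb5_mul, map_mul, map_X]
    congr 1
    simp [phiS]

theorem constantCoeff_phiS_map (A B f : MvPolynomial (Fin 2) K) :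
    PowerSeries.constantCoeff (phiS A B (map C f)) = f := by
  rw [phiS_map, phi, constantCoeff_flow, ev_emb5]

theorem phiS_map_ne_zero (A B : MvPolynomial (Fin 2) K) {f : MvPolynomial (Fin 2) K}
    (hf : f ≠ 0) : phiS A B (map C f) ≠ 0 := by
  intro h
  apply hf
  rw [← constantCoeff_phiS_map A B f, h, map_zero]

/-- The time derivative along the generic orbit is the derivation `A³ D₀` in `X, Y`. -/
theorem derivative_phiS (A B : MvPolynomial (Fin 2) K)
    (f : MvPolynomial (Fin 2) (MvPolynomial (Fin 2) K)) :
    PowerSeries.derivative _ (phiS A B f)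
      = phiS A B (map C A ^ 3 * derD0 (map C A) (map C B) f) := by
  induction f using MvPolynomial.induction_on with
  | C c => rw [phiS_C, PowerSeries.derivative_C, derD0_C, mul_zero, map_zero]
  | add p q hp hq => rw [map_add, map_add, hp, hq, derD0_add, mul_add, map_add]
  | mul_X p i hp =>
    have hX : PowerSeries.derivative _ (phiS A B (X i))
        = phiS A B (map C A ^ 3 * derD0 (map C A) (map C B) (X i)) := by
      have h1 : (X i : MvPolynomial (Fin 2) (MvPolynomial (Fin 2) K)) = map C (X i) := by simp
      rw [h1, derD0_map, ← map_pow, ← map_mul, phiS_map, phiS_map, phi, derivative_flow, D3_emb5]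
    rw [map_mul, Derivation.leibniz, hp, hX, derD0_mul, smul_eq_mul, smul_eq_mul]
    simp only [map_mul, map_add]
    ring

/-- The series `y₁²` along the generic orbit. -/
def zser (A B : MvPolynomial (Fin 2) K) : PowerSeries (MvPolynomial (Fin 2) K) :=
  phi A B (X 2 ^ 2)

/-- The series `3 y₂² - 2 y₃ y₁` along the generic orbit. -/
def sser (A B : MvPolynomial (Fin 2) K) : PowerSeries (MvPolynomial (Fin 2) K) :=
  phi A B schw

theorem constantCoeff_zser (A B : MvPolynomial (Fin 2) K) :
    PowerSeries.constantCoeff (zser A B) = 1 := by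
  rw [zser, phi, constantCoeff_flow, map_pow, ev_X2, one_pow]

theorem zser_ne_zero (A B : MvPolynomial (Fin 2) K) : zser A B ≠ 0 := by
  intro h
  have := constantCoeff_zser A B
  simp [h] at this

theorem constantCoeff_sser (A B : MvPolynomial (Fin 2) K) :
    PowerSeries.constantCoeff (sser A B) = 0 := by
  rw [sser, phi, constantCoeff_flow, ev_schw]

theorem derivative_zser (A B : MvPolynomial (Fin 2) K) :
    PowerSeries.derivative _ (zser A B)
      = zser A B * phiS A B (2 * map C A ^ 2 * wPol (map C A) (map C B) 1) := by
  rw [zser, phi, derivative_flow, D3_sq, map_mul, ← phi, ← phiS_map, wPol_map]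
  simp

theorem derivative_sser (A B : MvPolynomial (Fin 2) K) :
    PowerSeries.derivative _ (sser A B)
      = sser A B * phiS A B (2 * map C A ^ 2 * wPol (map C A) (map C B) 1)
        - zser A B ^ 2 * phiS A B (2 * wPol (map C A) (map C B) 3) := by
  rw [sser, phi, derivative_flow, D3_schw, map_sub, map_mul, map_mul, ← phi, ← phiS_map,
    ← phiS_map, wPol_map, wPol_map, zser, ← map_pow (phi A B), ← pow_mul]
  simp

theorem sum_mul_mon (A B : MvPolynomial (Fin 2) K) {N : ℕ}
    (c : MonIdx N → MvPolynomial (Fin 2) K) (y : MvPolynomial (Fin 5) K) :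
    ∑ p, PowerSeries.C (c p) * phi A B (y * emb5 (mon p))
      = phiS A B (polyOf c) * phi A B y := by
  rw [polyOf, map_sum, Finset.sum_mul]
  refine Finset.sum_congr rfl fun p _ => ?_
  have hmon : phi A B (emb5 (mon p)) = phiS A B (mon p) := by
    rw [← phiS_map]
    simp [mon]
  rw [map_mul, map_mul, phiS_C, hmon, mul_assoc, mul_comm (phi A B y)]

theorem sum_basV3 (A B : MvPolynomial (Fin 2) K) (N : ℕ)
    (c : MonIdx N ⊕ (MonIdx N ⊕ MonIdx N) → MvPolynomial (Fin 2) K) :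
    ∑ j, PowerSeries.C (c j) * phi A B (basV3 j)
      = phiS A B (polyOf fun p => c (.inl p)) * zser A B ^ 2
        + phiS A B (polyOf fun p => c (.inr (.inl p))) * sser A B
        + phiS A B (polyOf fun p => c (.inr (.inr p))) * zser A B := by
  have hz : zser A B ^ 2 = phi A B (X 2 ^ 4) := by
    rw [zser, ← map_pow, ← pow_mul]
  rw [Fintype.sum_sum_type, Fintype.sum_sum_type, ← add_assoc, hz, sser, zser, ← sum_mul_mon,
    ← sum_mul_mon, ← sum_mul_mon]
  rfl

theorem row_eq_zero_iff (A B : MvPolynomial (Fin 2) K) (N : ℕ)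
    (c : MonIdx N ⊕ (MonIdx N ⊕ MonIdx N) → MvPolynomial (Fin 2) K) :
    ∑ j, PowerSeries.C (c j) * phi A B (basV3 j) = 0
      ↔ ∀ i, ∑ j, row A B N i j * c j = 0 := by
  rw [PowerSeries.ext_iff]
  refine forall_congr' fun i => ?_
  have h : PowerSeries.coeff i (∑ j, PowerSeries.C (c j) * phi A B (basV3 j))
      = ((i.factorial : K)⁻¹) • ∑ j, row A B N i j * c j := by
    rw [map_sum, Finset.smul_sum]
    refine Finset.sum_congr rfl fun j _ => ?_
    rw [PowerSeries.coeff_C_mul, phi, coeff_flow, ← row, mul_smul_comm, mul_comm]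
  rw [h, map_zero, smul_eq_zero]
  have : ((i.factorial : K)⁻¹) ≠ 0 := inv_ne_zero (by exact_mod_cast Nat.factorial_ne_zero i)
  simp [this]

/-- Kernel vectors of the extactic matrix correspond to relations along the generic orbit. -/
theorem det_row_eq_zero_iff (A B : MvPolynomial (Fin 2) K) (N n : ℕ)
    (e : (MonIdx N ⊕ (MonIdx N ⊕ MonIdx N)) ≃ Fin n) :
    Matrix.det (Matrix.of fun i j : Fin n => row A B N i (e.symm j)) = 0 ↔
      ∃ a b c : MvPolynomial (Fin 2) (MvPolynomial (Fin 2) K), a.totalDegree ≤ N ∧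
        b.totalDegree ≤ N ∧ c.totalDegree ≤ N ∧ ¬ (a = 0 ∧ b = 0 ∧ c = 0) ∧
        phiS A B a * zser A B ^ 2 + phiS A B b * sser A B + phiS A B c * zser A B = 0 := by
  constructor
  · intro h
    obtain ⟨c, hc0, hc⟩ := Matrix.exists_mulVec_eq_zero_iff.mpr h
    obtain ⟨g, hg0, hg⟩ := Matrix.exists_vecMul_eq_zero_iff.mpr h
    have hall : ∀ i, ∑ j, row A B N i j * c (e j) = 0 := by
      refine connection_annihilator (nabla A B (N := N)) (fun f => A ^ 3 * derD0 A B f)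
        (nabla_add A B) (fun f u => nabla_smul A B f u) (row A B N) (row_succ A B N) n g hg0 ?_ (fun j => c (e j)) ?_
      · funext j
        have := congrFun hg (e j)
        simpa [Matrix.vecMul, dotProduct] using this
      · intro i hi
        have := congrFun hc ⟨i, hi⟩
        rw [Matrix.mulVec, dotProduct] at this
        rw [← Equiv.sum_comp e.symm]
        simpa using this
    rw [← row_eq_zero_iff, sum_basV3] at hall
    refine ⟨_, _, _, totalDegree_polyOf_le _, totalDegree_polyOf_le _, totalDegree_polyOf_le _,
      ?_, hall⟩
    rintro ⟨h1, h2, h3⟩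
    apply hc0
    funext i
    obtain ⟨j, rfl⟩ := e.surjective i
    rcases j with p | p | p
    · simpa [h1] using (coeff_polyOf (fun p => c (e (.inl p))) p).symm
    · simpa [h2] using (coeff_polyOf (fun p => c (e (.inr (.inl p)))) p).symm
    · simpa [h3] using (coeff_polyOf (fun p => c (e (.inr (.inr p)))) p).symm
  · rintro ⟨a, b, c, ha, hb, hc, hne, h⟩
    obtain ⟨a, rfl⟩ := exists_polyOf a ha
    obtain ⟨b, rfl⟩ := exists_polyOf b hb
    obtain ⟨c, rfl⟩ := exists_polyOf c hc
    have hall := (row_eq_zero_iff A B N (Sum.elim a (Sum.elim b c))).mp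
      ((sum_basV3 A B N _).trans h)
    refine Matrix.exists_mulVec_eq_zero_iff.mp
      ⟨fun i => Sum.elim a (Sum.elim b c) (e.symm i), ?_, ?_⟩
    · intro h0
      apply hne
      have hz : ∀ j, Sum.elim a (Sum.elim b c) j = 0 := fun j => by
        simpa using congrFun h0 (e j)
      have ha0 : a = 0 := funext fun p => hz (.inl p)
      have hb0 : b = 0 := funext fun p => hz (.inr (.inl p))
      have hc0 : c = 0 := funext fun p => hz (.inr (.inr p))
      simp [ha0, hb0, hc0, polyOf]
    · funext i
      rw [Matrix.mulVec, dotProduct]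
      have := hall i
      rw [← Equiv.sum_comp e.symm] at this
      simpa using this

/-- The extactic curve vanishes exactly when the generic orbit lies on a hypersurface defined by a
nonzero element of `V₃` with coefficients depending on the initial point. -/
theorem extactic3_eq_zero_iff (A B : MvPolynomial (Fin 2) K) (N : ℕ) :
    extactic3 A B N = 0 ↔
      ∃ a b c : MvPolynomial (Fin 2) (MvPolynomial (Fin 2) K), a.totalDegree ≤ N ∧
        b.totalDegree ≤ N ∧ c.totalDegree ≤ N ∧ ¬ (a = 0 ∧ b = 0 ∧ c = 0) ∧
        phiS A B a * zser A B ^ 2 + phiS A B b * sser A B + phiS A B c * zser A B = 0 := by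
  rw [← det_row_eq_zero_iff A B N _ (Fintype.equivFin _), extactic3]
  simp only [row, coe_D3, ev]

end orbit

/-! ### First integrals give relations along the orbit -/

section converse
variable {K : Type*} [Field K] [CharZero K]

/-- Restriction to the generic orbit of the polynomials in `X, Y` with constant coefficients. -/
def hom (A B : MvPolynomial (Fin 2) K) :
    MvPolynomial (Fin 2) K →+* PowerSeries (MvPolynomial (Fin 2) K) :=
  (phiS A B).comp (map C)

theorem constantCoeff_hom (A B f : MvPolynomial (Fin 2) K) :
    PowerSeries.constantCoeff (hom A B f) = f :=
  constantCoeff_phiS_map A B f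

theorem derivative_hom (A B f : MvPolynomial (Fin 2) K) :
    PowerSeries.derivative _ (hom A B f) = hom A B A ^ 3 * hom A B (derD0 A B f) := by
  rw [hom, RingHom.comp_apply, derivative_phiS, derD0_map]
  simp

theorem derivative_zser' (A B : MvPolynomial (Fin 2) K) :
    PowerSeries.derivative _ (zser A B)
      = zser A B * (2 * hom A B A ^ 2 * hom A B (wPol A B 1)) := by
  rw [derivative_zser, wPol_map]
  simp only [hom, RingHom.comp_apply, map_mul, map_pow, map_ofNat]

theorem derivative_sser' (A B : MvPolynomial (Fin 2) K) :
    PowerSeries.derivative _ (sser A B)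
      = sser A B * (2 * hom A B A ^ 2 * hom A B (wPol A B 1))
        - zser A B ^ 2 * (2 * hom A B (wPol A B 3)) := by
  rw [derivative_sser, wPol_map, wPol_map]
  simp only [hom, RingHom.comp_apply, map_mul, map_pow, map_ofNat]

theorem totalDegree_map_le' {R R' : Type*} [CommRing R] [CommRing R'] (φ : R →+* R')
    (f : MvPolynomial (Fin 2) R) : (map φ f).totalDegree ≤ f.totalDegree :=
  Finset.sup_mono (support_map_subset φ f)

omit [CharZero K] in
theorem totalDegree_C_mul_map_le (r f : MvPolynomial (Fin 2) K) (N : ℕ) (hf : f.totalDegree ≤ N) :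
    (C r * map (C : K →+* MvPolynomial (Fin 2) K) f).totalDegree ≤ N := by
  refine (totalDegree_mul _ _).trans ?_
  rw [totalDegree_C, zero_add]
  exact (totalDegree_map_le' _ f).trans hf

omit [CharZero K] in
theorem C_mul_map_ne_zero {r f : MvPolynomial (Fin 2) K} (hr : r ≠ 0) (hf : f ≠ 0) :
    C r * map (C : K →+* MvPolynomial (Fin 2) K) f ≠ 0 :=
  mul_ne_zero ((map_ne_zero_iff C (C_injective _ _)).mpr hr)
    ((map_ne_zero_iff _ (map_injective _ (C_injective _ _))).mpr hf)

/-- If `F = p/q` is a rational first integral then `F(X,Y) = F(x,y)` along the orbit of `(x,y)`. -/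
theorem extactic3_of_rat (A B : MvPolynomial (Fin 2) K) (N : ℕ) (h : HasRatFI A B N) :
    extactic3 A B N = 0 := by
  obtain ⟨p, q, hq, hpN, hqN, heq, hne⟩ := h
  rw [extactic3_eq_zero_iff]
  refine ⟨C q * map C p - C p * map C q, 0, 0, ?_, by simp, by simp, ?_, ?_⟩
  · exact (totalDegree_sub _ _).trans (max_le (totalDegree_C_mul_map_le _ _ _ hpN)
      (totalDegree_C_mul_map_le _ _ _ hqN))
  · rintro ⟨h0, -, -⟩
    have hco : ∀ m, q * C (coeff m p) = p * C (coeff m q) := by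
      intro m
      have := congrArg (coeff m) h0
      rw [coeff_sub, coeff_C_mul, coeff_C_mul, coeff_map, coeff_map, coeff_zero] at this
      exact sub_eq_zero.mp this
    obtain ⟨m, hm⟩ := ne_zero_iff.mp hq
    apply hne (coeff m p / coeff m q)
    have hC : (C (coeff m q) : MvPolynomial (Fin 2) K) ≠ 0 := by simpa using hm
    apply mul_right_cancel₀ hC
    rw [← hco m, mul_right_comm, ← C_mul, div_mul_cancel₀ _ hm, mul_comm]
  · have key : phiS A B (C q * map C p - C p * map C q) = 0 := by
      rw [map_sub, map_mul, map_mul, phiS_C, phiS_C]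
      change PowerSeries.C q * hom A B p - PowerSeries.C p * hom A B q = 0
      refine ode_unique _ (hom A B q) (hom A B A ^ 3 * hom A B (derD0 A B q)) ?_ ?_ ?_
      · rwa [constantCoeff_hom]
      · simp [constantCoeff_hom, mul_comm]
      · have h1 := congrArg (hom A B) heq
        simp only [map_mul] at h1
        simp only [map_sub, Derivation.leibniz, PowerSeries.derivative_C, derivative_hom,
          smul_eq_mul]
        linear_combination PowerSeries.C q * hom A B A ^ 3 * h1
    rw [key]
    simp

/-- If `G = p/q` is a 2-Darbouxian first integral then `G(X,Y) y₁² = G(x,y)` along the orbit. -/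
theorem extactic3_of_darb (A B : MvPolynomial (Fin 2) K) (N : ℕ) (h : HasDarbFI A B 2 N) :
    extactic3 A B N = 0 := by
  obtain ⟨p, q, hq, hp, hpN, hqN, heq⟩ := h
  rw [extactic3_eq_zero_iff]
  refine ⟨C q * map C p, 0, -(C p * map C q), totalDegree_C_mul_map_le _ _ _ hpN, by simp, ?_,
    ?_, ?_⟩
  · rw [totalDegree_neg]
    exact totalDegree_C_mul_map_le _ _ _ hqN
  · rintro ⟨h0, -, -⟩
    exact C_mul_map_ne_zero hq hp h0
  · have key : PowerSeries.C q * (hom A B p * zser A B) - PowerSeries.C p * hom A B q = 0 := by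
      refine ode_unique _ (hom A B q) (hom A B A ^ 3 * hom A B (derD0 A B q)) ?_ ?_ ?_
      · rwa [constantCoeff_hom]
      · simp [constantCoeff_hom, constantCoeff_zser, mul_comm]
      · have h1 := congrArg (hom A B) heq
        simp only [map_mul, map_sub, map_neg, map_natCast] at h1
        push_cast at h1
        simp only [map_sub, Derivation.leibniz, PowerSeries.derivative_C, derivative_hom,
          derivative_zser', smul_eq_mul]
        linear_combination PowerSeries.C q * zser A B * hom A B A ^ 2 * h1
    rw [map_zero, map_neg, map_mul, map_mul, phiS_C, phiS_C]
    change PowerSeries.C q * hom A B p * _ + _ + -(PowerSeries.C p * hom A B q) * _ = 0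
    linear_combination zser A B * key

/-- If `F = p/q` is a Riccati first integral then `F(X,Y) y₁² - S/2 = F(x,y)` along the orbit,
`S` being the Schwarzian of the flow. -/
theorem extactic3_of_ric (A B : MvPolynomial (Fin 2) K) (N : ℕ) (h : HasRicFI A B N) :
    extactic3 A B N = 0 := by
  obtain ⟨p, q, hq, hpN, hqN, heq⟩ := h
  rw [extactic3_eq_zero_iff]
  refine ⟨C (4 * q) * map C p, C q * map C q, -(C (4 * p) * map C q),
    totalDegree_C_mul_map_le _ _ _ hpN, totalDegree_C_mul_map_le _ _ _ hqN, ?_, ?_, ?_⟩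
  · rw [totalDegree_neg]
    exact totalDegree_C_mul_map_le _ _ _ hqN
  · rintro ⟨-, h0, -⟩
    exact C_mul_map_ne_zero hq hq h0
  · have heq2 : 2 * (A ^ 3 * (q * derD0 A B p - p * derD0 A B q))
        = -(4 * A ^ 2 * wPol A B 1 * p * q) + wPol A B 3 * q ^ 2 := by
      have hC : (2 : MvPolynomial (Fin 2) K) * C (1 / 2 : K) = 1 := by
        rw [← map_ofNat C 2, ← C_mul]
        norm_num
      rw [heq]
      linear_combination wPol A B 3 * q ^ 2 * hC
    have key : PowerSeries.C q * (4 * hom A B p * zser A B ^ 2 + hom A B q * sser A B)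
        - PowerSeries.C (4 * p) * (hom A B q * zser A B) = 0 := by
      refine ode_unique _ (hom A B q) (hom A B A ^ 3 * hom A B (derD0 A B q)
        + hom A B q * (2 * hom A B A ^ 2 * hom A B (wPol A B 1))) ?_ ?_ ?_
      · rwa [constantCoeff_hom]
      · simp only [map_sub, map_add, map_mul, map_pow, map_ofNat, PowerSeries.constantCoeff_C,
          constantCoeff_hom, constantCoeff_zser, constantCoeff_sser]
        ring
      · have h1 := congrArg (hom A B) heq2
        simp only [map_mul, map_sub, map_neg, map_add, map_pow, map_ofNat] at h1
        have h4 : PowerSeries.derivative (MvPolynomial (Fin 2) K) 4 = 0 := by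
          rw [← map_ofNat PowerSeries.C 4, PowerSeries.derivative_C]
        simp only [map_sub, map_add, pow_two (zser A B), Derivation.leibniz,
          PowerSeries.derivative_C, derivative_hom, derivative_zser', derivative_sser', h4,
          smul_eq_mul]
        linear_combination 2 * PowerSeries.C q * zser A B ^ 2 * h1
    have hom_def : ∀ f, phiS A B (map C f) = hom A B f := fun _ => rfl
    simp only [map_neg, map_mul, phiS_C, map_ofNat, hom_def] at key ⊢
    linear_combination key

end converse

/-! ### The ideal of the generic orbit is principal -/

/-- A nonzero prime of `D[T]` lying over `0`, `D` a UFD, is principal. -/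
theorem exists_generator {D : Type*} [CommRing D] [IsDomain D] [UniqueFactorizationMonoid D]
    (P : Ideal (Polynomial D)) [hP : P.IsPrime] (h0 : ∀ a : D, Polynomial.C a ∈ P → a = 0)
    (hne : P ≠ ⊥) : ∃ f ∈ P, f ≠ 0 ∧ ∀ h ∈ P, f ∣ h := by
  classical
  obtain ⟨g, hgP, hg0⟩ := Submodule.exists_mem_ne_zero_of_ne_bot hne
  have hex : ∃ n, ∃ f ∈ P, f ≠ 0 ∧ f.natDegree = n := ⟨_, g, hgP, hg0, rfl⟩
  obtain ⟨f₁, hf₁P, hf₁0, hf₁n⟩ := Nat.find_spec hex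
  -- a prime factor of an element of minimal degree still has minimal degree
  obtain ⟨f, hfP, hf, hff₁⟩ : ∃ f ∈ P, Prime f ∧ f ∣ f₁ := by
    obtain ⟨s, hs, hsf⟩ := UniqueFactorizationMonoid.exists_prime_factors f₁ hf₁0
    have : s.prod ∈ P := by
      obtain ⟨u, hu⟩ := hsf
      have : s.prod * u ∈ P := hu ▸ hf₁P
      exact (hP.mem_or_mem this).resolve_right fun hu =>
        hP.ne_top (P.eq_top_of_isUnit_mem hu u.isUnit)
    obtain ⟨p, hps, hpP⟩ := (hP.multiset_prod_mem_iff_exists_mem s).mp this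
    exact ⟨p, hpP, hs p hps, (Multiset.dvd_prod hps).trans hsf.dvd⟩
  have hmin : ∀ h ∈ P, h ≠ 0 → f.natDegree ≤ h.natDegree := fun h hh hh0 =>
    (Polynomial.natDegree_le_of_dvd hff₁ hf₁0).trans
      (hf₁n.le.trans (Nat.find_min' hex ⟨h, hh, hh0, rfl⟩))
  have hpos : 0 < f.natDegree := by
    rw [Nat.pos_iff_ne_zero]
    intro hd
    rw [Polynomial.eq_C_of_natDegree_eq_zero hd] at hfP
    exact hf.ne_zero (by rw [Polynomial.eq_C_of_natDegree_eq_zero hd, h0 _ hfP, map_zero])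
  refine ⟨f, hfP, hf.ne_zero, fun h => ?_⟩
  induction hn : h.natDegree using Nat.strong_induction_on generalizing h with
  | _ n ih =>
    subst hn
    intro hh
    rcases eq_or_ne h 0 with rfl | hh0
    · exact dvd_zero f
    have hle := hmin h hh hh0
    have hmem : f.cancelLeads h ∈ P :=
      P.sub_mem (P.mul_mem_left _ hh) (P.mul_mem_left _ hfP)
    have hdvd := ih _ (Polynomial.natDegree_cancelLeads_lt_of_natDegree_le_natDegree hle
      (hpos.trans_le hle)) _ rfl hmem
    rw [Polynomial.cancelLeads, dvd_sub_left (Dvd.intro_left _ rfl), Nat.sub_eq_zero_of_le hle,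
      pow_zero, mul_one] at hdvd
    refine (hf.dvd_or_dvd hdvd).resolve_left fun hlc => hpos.ne' ?_
    have := Polynomial.natDegree_le_of_dvd hlc
      (by simpa using hf.ne_zero)
    simpa using this

section
variable {K : Type*} [Field K] [CharZero K]

/-- Along the generic orbit the second coordinate is transcendental over `K[x,y]`, being non-constant
in time. -/
theorem transcendental_X (A B : MvPolynomial (Fin 2) K) (hA : A ≠ 0) (hB : B ≠ 0) :
    Transcendental (MvPolynomial (Fin 2) K) (phiS A B (X 1)) := by
  rw [transcendental_iff]
  intro g
  induction hn : g.natDegree using Nat.strong_induction_on generalizing g with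
  | _ n ih =>
    subst hn
    intro hg
    have hder := congrArg (PowerSeries.derivative (MvPolynomial (Fin 2) K)) hg
    rw [Derivation.map_aeval, map_zero, smul_eq_mul, derivative_phiS] at hder
    have hX : derD0 (map C A) (map C B)
        (X 1 : MvPolynomial (Fin 2) (MvPolynomial (Fin 2) K)) = map C B := by
      simp [derD0]
    rw [hX, ← map_pow, ← map_mul] at hder
    have hg' := (mul_eq_zero.mp hder).resolve_right
      (phiS_map_ne_zero A B (mul_ne_zero (pow_ne_zero 3 hA) hB))
    have hdeg : g.natDegree = 0 := by
      by_contra hpos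
      have := ih _ (Polynomial.natDegree_derivative_lt hpos) _ rfl hg'
      exact hpos (Polynomial.derivative_eq_zero.mp this)
    rw [Polynomial.eq_C_of_natDegree_eq_zero hdeg] at hg ⊢
    rw [Polynomial.aeval_C] at hg
    have : PowerSeries.C (g.coeff 0) = 0 := hg
    rw [(map_eq_zero_iff _ PowerSeries.C_injective).mp this, map_zero]

/-- If it is nonzero, the ideal of the polynomials in `X, Y` with coefficients in `K[x,y]` that vanish
on the generic orbit is principal. -/
theorem exists_ker_generator (A B : MvPolynomial (Fin 2) K) (hA : A ≠ 0) (hB : B ≠ 0)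
    (h : MvPolynomial (Fin 2) (MvPolynomial (Fin 2) K)) (hh : h ≠ 0) (hker : phiS A B h = 0) :
    ∃ f, f ≠ 0 ∧ phiS A B f = 0 ∧ ∀ g, phiS A B g = 0 → f ∣ g := by
  let e := MvPolynomial.finSuccEquiv (MvPolynomial (Fin 2) K) 1
  let P : Ideal (Polynomial (MvPolynomial (Fin 1) (MvPolynomial (Fin 2) K))) :=
    RingHom.ker ((phiS A B).comp (e.symm : _ →+* _))
  have hmem : ∀ g, g ∈ P ↔ phiS A B (e.symm g) = 0 := fun g => RingHom.mem_ker
  have hP : P.IsPrime := RingHom.ker_isPrime _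
  have hAI : AlgebraicIndependent (MvPolynomial (Fin 2) K)
      (fun _ : Fin 1 => phiS A B (X 1)) :=
    algebraicIndependent_unique_type_iff.mpr (transcendental_X A B hA hB)
  have hC : ∀ a, phiS A B (e.symm (Polynomial.C a)) = aeval (fun _ => phiS A B (X 1)) a := by
    intro a
    induction a using MvPolynomial.induction_on with
    | C r =>
      have h1 : (Polynomial.C (C r) : Polynomial (MvPolynomial (Fin 1) (MvPolynomial (Fin 2) K)))
          = algebraMap _ _ r := rfl
      rw [aeval_C, h1, e.symm.commutes, algebraMap_eq, phiS_C]
      rfl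
    | add p q hp hq => simp only [map_add, hp, hq]
    | mul_X p i hp =>
      simp only [map_mul, hp, aeval_X]
      congr 2
      rw [AlgEquiv.symm_apply_eq]
      have := finSuccEquiv_X_succ (R := MvPolynomial (Fin 2) K) (j := i)
      rw [← this, Subsingleton.elim i 0]
      rfl
  obtain ⟨f, hfP, hf0, hf⟩ := exists_generator P
    (fun a ha => (injective_iff_map_eq_zero _).mp hAI a (by rw [← hC]; exact (hmem _).mp ha))
    (fun hbot => hh (by
      have : e h ∈ P := by rw [hmem, AlgEquiv.symm_apply_apply]; exact hker
      rw [hbot, Ideal.mem_bot] at this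
      simpa using this))
  refine ⟨e.symm f, by simpa using hf0, (hmem _).mp hfP, fun g hg => ?_⟩
  have := map_dvd e.symm (hf (e g) (by rw [hmem, AlgEquiv.symm_apply_apply]; exact hg))
  rwa [AlgEquiv.symm_apply_apply] at this

end

/-! ### Rational first integrals from an algebraic orbit -/

section
variable {K : Type*} [Field K]

theorem coeff_coeff_comm (f : MvPolynomial (Fin 2) (MvPolynomial (Fin 2) K)) (m n : Fin 2 →₀ ℕ) :
    coeff m (coeff n (commAlgEquiv K (Fin 2) (Fin 2) f)) = coeff n (coeff m f) := by
  classical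
  induction f using MvPolynomial.induction_on' with
  | monomial u a =>
    induction a using MvPolynomial.induction_on' with
    | monomial v k =>
      have : commAlgEquiv K (Fin 2) (Fin 2) (monomial u (monomial v k))
          = monomial v (monomial u k) := AddMonoidAlgebra.commAlgEquiv_single_single ..
      rw [this, coeff_monomial, coeff_monomial]
      split_ifs <;> simp_all [coeff_monomial]
    | add p q hp hq => simp only [map_add, coeff_add, hp, hq]
  | add p q hp hq => simp only [map_add, coeff_add, hp, hq]

theorem totalDegree_coeff_comm_le (f : MvPolynomial (Fin 2) (MvPolynomial (Fin 2) K))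
    (n : Fin 2 →₀ ℕ) :
    (coeff n (commAlgEquiv K (Fin 2) (Fin 2) f)).totalDegree ≤ f.totalDegree := by
  refine Finset.sup_mono fun m hm => ?_
  rw [mem_support_iff, coeff_coeff_comm] at hm
  rw [mem_support_iff]
  rintro h
  rw [h, coeff_zero] at hm
  exact hm rfl

theorem comm_map_C (p : MvPolynomial (Fin 2) K) :
    commAlgEquiv K (Fin 2) (Fin 2) (map C p) = C p := by
  induction p using MvPolynomial.induction_on with
  | C k => simp
  | add p q hp hq => simp only [map_add, hp, hq]
  | mul_X p i hp => simp only [map_mul, hp, map_X, commAlgEquiv_X]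

/-- The derivation `D₀` of `K[x,y][X,Y]` acts coefficientwise on `K[X,Y][x,y]`. -/
theorem coeff_comm_derD0 (A B : MvPolynomial (Fin 2) K)
    (f : MvPolynomial (Fin 2) (MvPolynomial (Fin 2) K)) (n : Fin 2 →₀ ℕ) :
    coeff n (commAlgEquiv K (Fin 2) (Fin 2) (derD0 (map C A) (map C B) f))
      = derD0 A B (coeff n (commAlgEquiv K (Fin 2) (Fin 2) f)) := by
  induction f using MvPolynomial.induction_on with
  | C r => rw [derD0_C, map_zero, coeff_zero, commAlgEquiv_C, coeff_map, derD0_C]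
  | add p q hp hq => simp only [derD0_add, map_add, coeff_add, hp, hq]
  | mul_X p i hp =>
    have hX : derD0 (map C A) (map C B)
        (X i : MvPolynomial (Fin 2) (MvPolynomial (Fin 2) K)) = map C (derD0 A B (X i)) := by
      rw [← derD0_map, map_X]
    rw [derD0_mul, hX, map_add, map_mul, map_mul, map_mul, comm_map_C, commAlgEquiv_X, coeff_add,
      mul_comm _ (C (X i)), mul_comm _ (C (X i)), mul_comm _ (C (derD0 A B (X i)))]
    simp only [coeff_C_mul, derD0_mul, hp]
    ring

variable [CharZero K]

/-- A generic orbit contained in a curve of degree `M` gives a rational first integral. -/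
theorem hasRatFI_of_ker (A B : MvPolynomial (Fin 2) K) (hA : A ≠ 0) (hB : B ≠ 0) (M : ℕ)
    (h : MvPolynomial (Fin 2) (MvPolynomial (Fin 2) K)) (hh : h ≠ 0) (hker : phiS A B h = 0)
    (hM : h.totalDegree ≤ M) : HasRatFI A B M := by
  obtain ⟨f, hf0, hfker, hf⟩ := exists_ker_generator A B hA hB h hh hker
  have hfM : f.totalDegree ≤ M := (totalDegree_le_of_dvd_of_isDomain (hf h hker) hh).trans hM
  set σ := commAlgEquiv K (Fin 2) (Fin 2) with hσ
  have hder : phiS A B (derD0 (map C A) (map C B) f) = 0 := by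
    have := derivative_phiS A B f
    rw [hfker, map_zero, map_mul, ← map_pow] at this
    exact (mul_eq_zero.mp this.symm).resolve_left (phiS_map_ne_zero A B (pow_ne_zero 3 hA))
  obtain ⟨g, hg⟩ := hf _ hder
  -- the cofactor of the generator does not involve the initial point
  obtain ⟨g₀, hg₀⟩ : ∃ g₀, σ g = C g₀ := by
    rcases eq_or_ne g 0 with rfl | hg0
    · exact ⟨0, by simp⟩
    have hdeg : (σ (derD0 (map C A) (map C B) f)).totalDegree ≤ (σ f).totalDegree := by
      refine Finset.sup_mono fun n hn => ?_
      rw [mem_support_iff, hσ, coeff_comm_derD0] at hn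
      rw [mem_support_iff]
      intro hz
      rw [hz] at hn
      simp [derD0] at hn
    rw [hg, map_mul, totalDegree_mul_of_isDomain (by simpa using hf0) (by simpa using hg0)] at hdeg
    exact ⟨_, totalDegree_eq_zero_iff_eq_C.mp (by omega)⟩
  have hP : ∀ n, derD0 A B (coeff n (σ f)) = g₀ * coeff n (σ f) := by
    intro n
    rw [hσ, ← coeff_comm_derD0, hg, map_mul, hg₀, mul_comm, coeff_C_mul]
  obtain ⟨i, hi⟩ := ne_zero_iff.mp (show σ f ≠ 0 by simpa using hf0)
  by_cases hprop : ∃ j, ∀ c, coeff j (σ f) ≠ C c * coeff i (σ f)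
  · obtain ⟨j, hj⟩ := hprop
    refine ⟨coeff j (σ f), coeff i (σ f), hi, (totalDegree_coeff_comm_le f j).trans hfM,
      (totalDegree_coeff_comm_le f i).trans hfM, ?_, hj⟩
    rw [hP, hP]
    ring
  · exfalso
    push Not at hprop
    choose c hc using hprop
    obtain ⟨m, hm⟩ := ne_zero_iff.mp hi
    have hfac : C (C (coeff m (coeff i (σ f)))) * f
        = C (coeff m f) * map C (coeff i (σ f)) := by
      ext m' n
      have e : ∀ m', coeff n (coeff m' f) = c n * coeff m' (coeff i (σ f)) := by
        intro m'
        rw [← coeff_coeff_comm, ← hσ, hc, coeff_C_mul]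
      rw [coeff_C_mul, coeff_C_mul, coeff_C_mul, coeff_map, mul_comm (coeff m f) (C _),
        coeff_C_mul, e, e]
      ring
    have hphi := congrArg (phiS A B) hfac
    rw [map_mul, map_mul, hfker, mul_zero, phiS_C] at hphi
    have hz := (mul_eq_zero.mp hphi.symm).resolve_right (phiS_map_ne_zero A B hi)
    rw [map_eq_zero_iff _ PowerSeries.C_injective] at hz
    have : coeff i (coeff m f) = 0 := by rw [hz, coeff_zero]
    rw [← coeff_coeff_comm] at this
    exact hm this

end

/-! ### First integrals from a relation along the orbit -/

section degrees
variable [CommRing L]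

theorem totalDegree_pderiv_le (i : Fin 2) (p : MvPolynomial (Fin 2) L) :
    (pderiv i p).totalDegree ≤ p.totalDegree - 1 := by
  rw [p.as_sum, map_sum, ← p.as_sum]
  refine totalDegree_finsetSum_le fun s hs => ?_
  rw [pderiv_monomial]
  rcases Nat.eq_zero_or_pos (s i) with h | h
  · simp [h]
  · refine (totalDegree_monomial_le _ _).trans (?_ : (Finsupp.sum _ fun _ e => e) ≤ _)
    have h1 : (s.sum fun _ e => e) ≤ p.totalDegree := le_totalDegree hs
    have h2 : s - Finsupp.single i 1 + Finsupp.single i 1 = s :=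
      tsub_add_cancel_of_le (Finsupp.single_le_iff.mpr h)
    rw [← h2, Finsupp.sum_add_index' (fun _ => rfl) (fun _ _ _ => rfl),
      Finsupp.sum_single_index rfl] at h1
    omega

variable {A B : MvPolynomial (Fin 2) L} {d : ℕ}

theorem totalDegree_derD0_le (hA : A.totalDegree ≤ d) (hB : B.totalDegree ≤ d)
    (p : MvPolynomial (Fin 2) L) {n : ℕ} (hp : p.totalDegree ≤ n) :
    (derD0 A B p).totalDegree ≤ d + (n - 1) := by
  have h0 := totalDegree_pderiv_le 0 p
  have h1 := totalDegree_pderiv_le 1 p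
  refine (totalDegree_add _ _).trans (max_le ?_ ?_) <;>
  · refine (totalDegree_mul _ _).trans ?_
    omega

theorem totalDegree_wPol_le (hA : A.totalDegree ≤ d) (hB : B.totalDegree ≤ d) (hd : 1 ≤ d)
    (r : ℕ) : (wPol A B r).totalDegree ≤ (r + 1) * d - r := by
  induction r with
  | zero => simpa [wPol] using hB
  | succ r ih =>
    have h0 := totalDegree_pderiv_le 1 A
    have h1 := totalDegree_pderiv_le 1 (wPol A B r)
    have h2 : r + 1 ≤ (r + 1) * d := Nat.le_mul_of_pos_right _ hd
    have h3 : (r + 1 + 1) * d = (r + 1) * d + d := by ring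
    refine (totalDegree_sub _ _).trans (max_le ?_ ((totalDegree_smul_le _ _).trans ?_)) <;>
    · refine (totalDegree_mul _ _).trans ?_
      omega

end degrees

theorem HasRatFI.mono {K : Type*} [Field K] {A B : MvPolynomial (Fin 2) K} {M N : ℕ} (h : M ≤ N) :
    HasRatFI A B M → HasRatFI A B N := by
  rintro ⟨p, q, hq, hp', hq', heq⟩
  exact ⟨p, q, hq, hp'.trans h, hq'.trans h, heq⟩

section forward
variable {K : Type*} [Field K] [CharZero K]

/-- Freezing the initial point of the orbit at a rational point `x` where `f` does not vanish. -/
theorem exists_specialization {f : MvPolynomial (Fin 2) (MvPolynomial (Fin 2) K)} (hf : f ≠ 0) :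
    ∃ x : Fin 2 → K, map (eval x) f ≠ 0 := by
  obtain ⟨m, hm⟩ := ne_zero_iff.mp hf
  obtain ⟨x, hx⟩ : ∃ x, eval x (coeff m f) ≠ 0 := by
    by_contra! h
    exact hm (MvPolynomial.funext fun x => by rw [h x, map_zero])
  refine ⟨x, ne_zero_iff.mpr ⟨m, ?_⟩⟩
  rwa [coeff_map]

omit [CharZero K] in
theorem map_eval_map_C (x : Fin 2 → K) (p : MvPolynomial (Fin 2) K) :
    map (eval x) (map C p) = p := by
  rw [map_map]
  have : (eval x).comp (C : K →+* MvPolynomial (Fin 2) K) = RingHom.id K := by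
    ext k
    simp
  rw [this, map_id]

theorem derivative_eq (A B : MvPolynomial (Fin 2) K)
    (f : MvPolynomial (Fin 2) (MvPolynomial (Fin 2) K)) :
    PowerSeries.derivative _ (phiS A B f) = phiS A B (map C A) ^ 3
      * phiS A B (derD0 (map C A) (map C B) f) := by
  rw [derivative_phiS, map_mul, map_pow]

/-- If `y₁²` is, along the generic orbit, a ratio `V/U` of polynomials, then either `U/V` gives, at a
suitable value of the initial point,
a 2-Darbouxian first integral, or the orbit is algebraic. -/
theorem of_zser_ratio (A B : MvPolynomial (Fin 2) K) (hA : A ≠ 0) (hB : B ≠ 0) {d Q : ℕ}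
    (hAd : A.totalDegree ≤ d) (hBd : B.totalDegree ≤ d) (hd : 1 ≤ d) (hQ : 1 ≤ Q)
    (U V : MvPolynomial (Fin 2) (MvPolynomial (Fin 2) K)) (hU : U.totalDegree ≤ Q)
    (hV : V.totalDegree ≤ Q) (hUV : ¬(U = 0 ∧ V = 0))
    (h : phiS A B U * zser A B = phiS A B V) :
    HasDarbFI A B 2 Q ∨ HasRatFI A B (2 * Q + 2 * d - 1) := by
  by_cases hφU : phiS A B U = 0
  · right
    have hφV : phiS A B V = 0 := by rw [← h, hφU, zero_mul]
    refine HasRatFI.mono (show Q ≤ _ by omega) ?_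
    by_cases hU0 : U = 0
    · exact hasRatFI_of_ker A B hA hB Q V (fun hV0 => hUV ⟨hU0, hV0⟩) hφV hV
    · exact hasRatFI_of_ker A B hA hB Q U hU0 hφU hU
  have hU0 : U ≠ 0 := by
    rintro rfl
    exact hφU (map_zero _)
  have hV0 : V ≠ 0 := by
    rintro rfl
    rw [map_zero] at h
    exact mul_ne_zero hφU (zser_ne_zero A B) h
  set A' : MvPolynomial (Fin 2) (MvPolynomial (Fin 2) K) := map C A with hA'
  set B' : MvPolynomial (Fin 2) (MvPolynomial (Fin 2) K) := map C B with hB'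
  have hA'd : A'.totalDegree ≤ d := (totalDegree_map_le' _ _).trans hAd
  have hB'd : B'.totalDegree ≤ d := (totalDegree_map_le' _ _).trans hBd
  set W := A' * (U * derD0 A' B' V - V * derD0 A' B' U) - 2 * wPol A' B' 1 * U * V with hW
  have hker : phiS A B W = 0 := by
    have hder := congrArg (PowerSeries.derivative (MvPolynomial (Fin 2) K)) h
    simp only [Derivation.leibniz, derivative_eq, derivative_zser, smul_eq_mul, ← hA', ← hB',
      map_mul, map_pow, map_ofNat] at hder
    have : phiS A B A' ^ 2 * phiS A B W = 0 := by
      simp only [hW, map_sub, map_mul, map_ofNat]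
      linear_combination (-phiS A B U) * hder
        + (phiS A B A' ^ 3 * phiS A B (derD0 A' B' U)
          + 2 * phiS A B A' ^ 2 * phiS A B (wPol A' B' 1) * phiS A B U) * h
    exact (mul_eq_zero.mp this).resolve_left (pow_ne_zero 2 (phiS_map_ne_zero A B hA))
  by_cases hW0 : W = 0
  · left
    obtain ⟨x, hx⟩ := exists_specialization (mul_ne_zero hU0 hV0)
    rw [map_mul] at hx
    refine ⟨map (eval x) U, map (eval x) V, right_ne_zero_of_mul hx, left_ne_zero_of_mul hx,
      (totalDegree_map_le' _ _).trans hU, (totalDegree_map_le' _ _).trans hV, ?_⟩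
    have hs := congrArg (map (eval x)) (hW.symm.trans hW0)
    simp only [map_sub, map_mul, ← derD0_map, ← wPol_map, map_ofNat, hA', hB', map_eval_map_C,
      map_zero] at hs
    push_cast
    linear_combination (-1) * hs
  · right
    refine hasRatFI_of_ker A B hA hB _ W hW0 hker ?_
    have e1 := totalDegree_derD0_le hA'd hB'd U hU
    have e2 := totalDegree_derD0_le hA'd hB'd V hV
    have e3 := totalDegree_wPol_le hA'd hB'd hd 1
    have t1 := totalDegree_mul U (derD0 A' B' V)
    have t2 := totalDegree_mul V (derD0 A' B' U)
    have t3 := totalDegree_sub (U * derD0 A' B' V) (V * derD0 A' B' U)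
    have t4 := totalDegree_mul A' (U * derD0 A' B' V - V * derD0 A' B' U)
    have t5 : (2 * wPol A' B' 1 * U * V).totalDegree ≤ (2 * d - 1) + Q + Q := by
      have : (2 * wPol A' B' 1).totalDegree ≤ (wPol A' B' 1).totalDegree := by
        rw [← map_ofNat C 2, C_mul']
        exact totalDegree_smul_le _ _
      have s1 := totalDegree_mul (2 * wPol A' B' 1) U
      have s2 := totalDegree_mul (2 * wPol A' B' 1 * U) V
      omega
    refine (totalDegree_sub _ _).trans (max_le ?_ ?_)
    · rcases max_cases (U * derD0 A' B' V).totalDegree (V * derD0 A' B' U).totalDegree <;> omega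
    · omega

/-- A linear relation between `y₁⁴`, `3y₂² - 2y₃y₁` and `y₁²` along the generic orbit gives a
first integral. -/
theorem of_relation (A B : MvPolynomial (Fin 2) K) (hA : A ≠ 0) (hB : B ≠ 0) {d N : ℕ}
    (hAd : A.totalDegree ≤ d) (hBd : B.totalDegree ≤ d) (hd : 1 ≤ d) (hN : 1 ≤ N)
    (h : extactic3 A B N = 0) :
    HasRicFI A B N ∨ HasDarbFI A B 2 (2 * N + 4 * d - 1) ∨ HasRatFI A B (4 * N + 10 * d - 3) := by
  obtain ⟨a, b, c, ha, hb, hc, hne, hrel⟩ := (extactic3_eq_zero_iff A B N).mp h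
  have hz := zser_ne_zero A B
  have hQ : 2 * (2 * N + 4 * d - 1) + 2 * d - 1 = 4 * N + 10 * d - 3 := by omega
  by_cases hb0 : b = 0
  · right
    rw [← hQ]
    refine of_zser_ratio A B hA hB hAd hBd hd (by omega) a (-c) (by omega)
      (by rw [totalDegree_neg]; omega) (fun ⟨h1, h2⟩ => hne ⟨h1, hb0, neg_eq_zero.mp h2⟩) ?_
    apply mul_right_cancel₀ hz
    rw [hb0, map_zero] at hrel
    rw [map_neg]
    linear_combination hrel
  set A' : MvPolynomial (Fin 2) (MvPolynomial (Fin 2) K) := map C A with hA'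
  set B' : MvPolynomial (Fin 2) (MvPolynomial (Fin 2) K) := map C B with hB'
  have hA'd : A'.totalDegree ≤ d := (totalDegree_map_le' _ _).trans hAd
  have hB'd : B'.totalDegree ≤ d := (totalDegree_map_le' _ _).trans hBd
  set U := b * (A' ^ 3 * derD0 A' B' a + 2 * A' ^ 2 * wPol A' B' 1 * a - 2 * wPol A' B' 3 * b)
    - A' ^ 3 * derD0 A' B' b * a with hU
  set V := A' ^ 3 * derD0 A' B' b * c - b * (A' ^ 3 * derD0 A' B' c) with hV
  have hUV : phiS A B U * zser A B = phiS A B V := by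
    have hder := congrArg (PowerSeries.derivative (MvPolynomial (Fin 2) K)) hrel
    simp only [map_add, map_zero, pow_two (zser A B), Derivation.leibniz, derivative_eq,
      derivative_zser, derivative_sser, smul_eq_mul, ← hA', ← hB',
      map_mul, map_pow, map_ofNat] at hder
    apply mul_right_cancel₀ hz
    simp only [hU, hV, map_sub, map_add, map_mul, map_pow, map_ofNat]
    linear_combination phiS A B b * hder
      - (phiS A B b * 2 * phiS A B A' ^ 2 * phiS A B (wPol A' B' 1)
        + phiS A B A' ^ 3 * phiS A B (derD0 A' B' b)) * hrel
  by_cases hU0 : U = 0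
  · left
    obtain ⟨x, hx⟩ := exists_specialization hb0
    have h4 : (4 : MvPolynomial (Fin 2) K) = C 4 := (map_ofNat C 4).symm
    refine ⟨map (eval x) a, 4 * map (eval x) b, mul_ne_zero (by norm_num) hx,
      (totalDegree_map_le' _ _).trans ha, ?_, ?_⟩
    · rw [h4, C_mul']
      exact (totalDegree_smul_le _ _).trans ((totalDegree_map_le' _ _).trans hb)
    · have hs := congrArg (map (eval x)) (hU.symm.trans hU0)
      simp only [map_sub, map_add, map_mul, map_pow, ← derD0_map, ← wPol_map, map_ofNat, hA', hB',
        map_eval_map_C, map_zero] at hs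
      have h4b : derD0 A B (4 * map (eval x) b) = 4 * derD0 A B (map (eval x) b) := by
        rw [derD0_mul, h4, derD0_C]
        ring
      have hC : (2 : MvPolynomial (Fin 2) K) * C (1 / 2 : K) = 1 := by
        rw [← map_ofNat C 2, ← C_mul]
        norm_num
      rw [h4b]
      linear_combination 4 * hs - 8 * wPol A B 3 * map (eval x) b ^ 2 * hC
  · right
    rw [← hQ]
    have e1 := totalDegree_derD0_le hA'd hB'd a ha
    have e2 := totalDegree_derD0_le hA'd hB'd b hb
    have e3 := totalDegree_derD0_le hA'd hB'd c hc
    have w1 := totalDegree_wPol_le hA'd hB'd hd 1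
    have w3 := totalDegree_wPol_le hA'd hB'd hd 3
    have p2 := totalDegree_pow A' 2
    have p3 := totalDegree_pow A' 3
    have two : ∀ f : MvPolynomial (Fin 2) (MvPolynomial (Fin 2) K),
        (2 * f).totalDegree ≤ f.totalDegree := fun f => by
      rw [← map_ofNat C 2, C_mul']
      exact totalDegree_smul_le _ _
    have m2 := two (A' ^ 2)
    have m3 := two (wPol A' B' 3)
    refine of_zser_ratio A B hA hB hAd hBd hd (by omega) U V ?_ ?_ (fun h => hU0 h.1) hUV
    · have s1 := totalDegree_mul (A' ^ 3) (derD0 A' B' a)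
      have s2 := totalDegree_mul (2 * A' ^ 2) (wPol A' B' 1)
      have s3 := totalDegree_mul (2 * A' ^ 2 * wPol A' B' 1) a
      have s4 := totalDegree_mul (2 * wPol A' B' 3) b
      have s5 := totalDegree_mul (A' ^ 3) (derD0 A' B' b)
      have s6 := totalDegree_mul (A' ^ 3 * derD0 A' B' b) a
      refine (totalDegree_sub _ _).trans (max_le ((totalDegree_mul _ _).trans ?_) ?_)
      · have := (totalDegree_sub (A' ^ 3 * derD0 A' B' a + 2 * A' ^ 2 * wPol A' B' 1 * a)
          (2 * wPol A' B' 3 * b)).trans (max_le_max (totalDegree_add _ _) le_rfl)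
        have : _ ≤ N + 4 * d - 1 := this.trans (max_le (max_le (by omega) (by omega)) (by omega))
        omega
      · omega
    · have s1 := totalDegree_mul (A' ^ 3) (derD0 A' B' b)
      have s2 := totalDegree_mul (A' ^ 3 * derD0 A' B' b) c
      have s3 := totalDegree_mul (A' ^ 3) (derD0 A' B' c)
      have s4 := totalDegree_mul b (A' ^ 3 * derD0 A' B' c)
      exact (totalDegree_sub _ _).trans (max_le (by omega) (by omega))

end forward

/-! ### Base change to the algebraic closure, and the theorem -/

section algebraicClosure
variable {K : Type*} [Field K] {A B : MvPolynomial (Fin 2) K}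

theorem mapAC_injective : Function.Injective (mapAC (K := K)) :=
  map_injective _ (algebraMap K (AlgebraicClosure K)).injective

theorem hasRatFI_mapAC {N : ℕ} : HasRatFI A B N → HasRatFI (mapAC A) (mapAC B) N := by
  rintro ⟨p, q, hq, hpN, hqN, heq, hne⟩
  have hq' : mapAC q ≠ 0 := (map_ne_zero_iff _ mapAC_injective).mpr hq
  refine ⟨mapAC p, mapAC q, hq', (totalDegree_map_le' _ _).trans hpN,
    (totalDegree_map_le' _ _).trans hqN, ?_, ?_⟩
  · simpa only [mapAC, map_mul, ← derD0_map] using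
      congrArg mapAC heq
  · -- a constant ratio of polynomials over `K` is a ratio of coefficients, hence lies in `K`
    intro c hc
    obtain ⟨m, hm⟩ := ne_zero_iff.mp hq
    have hco : ∀ n, algebraMap K (AlgebraicClosure K) (coeff n p)
        = c * algebraMap K (AlgebraicClosure K) (coeff n q) := fun n => by
      have := congrArg (coeff n) hc
      simpa only [mapAC, coeff_C_mul, coeff_map] using this
    refine hne (coeff m p / coeff m q) (MvPolynomial.ext _ _ fun n => ?_)
    apply (algebraMap K (AlgebraicClosure K)).injective
    have hm' : algebraMap K (AlgebraicClosure K) (coeff m q) ≠ 0 := by simpa using hm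
    rw [coeff_C_mul, map_mul, map_div₀, hco, hco, mul_div_cancel_right₀ _ hm']

theorem hasDarbFI_mapAC {k N : ℕ} : HasDarbFI A B k N → HasDarbFI (mapAC A) (mapAC B) k N := by
  rintro ⟨p, q, hq, hp, hpN, hqN, heq⟩
  refine ⟨mapAC p, mapAC q,
    (map_ne_zero_iff _ mapAC_injective).mpr hq, (map_ne_zero_iff _ mapAC_injective).mpr hp,
    (totalDegree_map_le' _ _).trans hpN, (totalDegree_map_le' _ _).trans hqN, ?_⟩
  simpa only [mapAC, map_mul, map_sub, map_neg, map_natCast, ← derD0_map,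
    ← wPol_map] using congrArg mapAC heq

theorem hasRicFI_mapAC {N : ℕ} : HasRicFI A B N → HasRicFI (mapAC A) (mapAC B) N := by
  rintro ⟨p, q, hq, hpN, hqN, heq⟩
  refine ⟨mapAC p, mapAC q,
    (map_ne_zero_iff _ mapAC_injective).mpr hq,
    (totalDegree_map_le' _ _).trans hpN, (totalDegree_map_le' _ _).trans hqN, ?_⟩
  have := congrArg mapAC heq
  simpa only [mapAC, map_mul, map_sub, map_neg, map_add, map_pow, map_ofNat, map_C,
    map_div₀, map_one, ← derD0_map, ← wPol_map] using this

end algebraicClosure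

/-- **The Riccati extactic curve theorem** (Theorem `thm:exta+cfi` of Chèze–Combot). -/
theorem riccati_extactic_curve {K : Type*} [Field K] [CharZero K]
    (A B : MvPolynomial (Fin 2) K) (hA : A ≠ 0) (hB : B ≠ 0)
    (hcop : ∀ p : MvPolynomial (Fin 2) K, p ∣ A → p ∣ B → IsUnit p)
    (d : ℕ) (hd : d = max A.totalDegree B.totalDegree) (hd1 : 1 ≤ d)
    (N : ℕ) (hN : 1 ≤ N) :
    (extactic3 A B N = 0 →
      ((HasRicFI (mapAC A) (mapAC B) N ∨
          HasDarbFI (mapAC A) (mapAC B) 2 (2 * N + 4 * d - 1) ∨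
          HasRatFI (mapAC A) (mapAC B) (4 * N + 10 * d - 3)) ∧
        (HasRicFI A B N ∨ HasDarbFI A B 2 (2 * N + 4 * d - 1) ∨
          HasRatFI A B (4 * N + 10 * d - 3)))) ∧
    ((HasRatFI (mapAC A) (mapAC B) N ∨ HasDarbFI (mapAC A) (mapAC B) 2 N ∨
        HasRicFI (mapAC A) (mapAC B) N) →
      extactic3 A B N = 0) := by
  have := charZero_of_injective_algebraMap (algebraMap K (AlgebraicClosure K)).injective
  constructor
  · intro h
    have hK := of_relation A B hA hB (hd ▸ le_max_left _ _) (hd ▸ le_max_right _ _) hd1 hN h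
    exact ⟨hK.imp hasRicFI_mapAC (Or.imp hasDarbFI_mapAC hasRatFI_mapAC), hK⟩
  · intro h
    apply mapAC_injective
    rw [mapAC, ← extactic3_map, mapAC, map_zero]
    rcases h with h | h | h
    · exact extactic3_of_rat _ _ N h
    · exact extactic3_of_darb _ _ N h
    · exact extactic3_of_ric _ _ N h

end
end ExtacticPaper
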